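/- Let M be a complete Riemannian manifold isometrically immersed as a submanifold of a space form (Euclidean space ℝ^{n+k}, the round sphere S^{n+k}, or hyperbolic space H^{n+k}). Let μ = min_{p ∈ M} dim 𝒩_p be the minimal index of nullity of M, where 𝒩 is the nullity distribution of the second fundamental form of M. Then for every point p ∈ M with dim 𝒩_p = μ, the maximal integral manifold of 𝒩 through p (a totally geodesic submanifold of M, with the induced metric) is a complete Riemannian manifold. -/

import Mathlib

noncomputable section

open Set

/-- The three model space forms: Euclidean space, the round sphere, hyperbolic space. -/
inductive SpaceFormKind : Type
  | euclidean : SpaceFormKind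
  | sphere : SpaceFormKind
  | hyperbolic : SpaceFormKind

/-- The sign of the `i`-th coordinate in the ambient bilinear form: for the hyperbolic case the
ambient linear space is the Lorentz space `ℝ^{D-1,1}` whose last coordinate is timelike. -/
def formSign (k : SpaceFormKind) (D : ℕ) (i : Fin D) : ℝ :=
  match k with
  | .hyperbolic => if (i : ℕ) + 1 = D then -1 else 1
  | _ => 1

/-- The ambient bilinear form: the Euclidean inner product in the euclidean and spherical cases,
the Lorentz (Minkowski) form in the hyperbolic case. -/
def aForm (k : SpaceFormKind) {D : ℕ} (x y : EuclideanSpace ℝ (Fin D)) : ℝ :=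
  ∑ i, formSign k D i * x i * y i

/-- The space form, realized inside its ambient linear space: all of `ℝ^D`, the unit sphere,
or the hyperboloid model of hyperbolic space in Lorentz space. -/
def spaceForm (k : SpaceFormKind) (D : ℕ) : Set (EuclideanSpace ℝ (Fin D)) :=
  match k with
  | .euclidean => Set.univ
  | .sphere => {x | aForm .sphere x x = 1}
  | .hyperbolic => {x | aForm .hyperbolic x x = -1 ∧ ∀ i : Fin D, (i : ℕ) + 1 = D → 0 < x i}

/-- The normal space of the space form itself inside the ambient linear space at a point `p`:
trivial in the euclidean case, and spanned by the position vector in the other two cases. -/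
def radialAt (k : SpaceFormKind) {D : ℕ} (p : EuclideanSpace ℝ (Fin D)) :
    Submodule ℝ (EuclideanSpace ℝ (Fin D)) :=
  match k with
  | .euclidean => ⊥
  | _ => Submodule.span ℝ {p}

/-- The tangent space of a subset `S ⊆ ℝ^D` at `p`: the span of all velocities at `0` of smooth
curves inside `S` passing through `p` at time `0`. -/
def TangentAt {D : ℕ} (S : Set (EuclideanSpace ℝ (Fin D))) (p : EuclideanSpace ℝ (Fin D)) :
    Submodule ℝ (EuclideanSpace ℝ (Fin D)) :=
  Submodule.span ℝ {v | ∃ c : ℝ → EuclideanSpace ℝ (Fin D),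
    ContDiff ℝ (⊤ : ℕ∞) c ∧ (∀ t, c t ∈ S) ∧ c 0 = p ∧ deriv c 0 = v}

/-- `φ : U → ℝ^D` is a (smooth, embedded) local parametrization of `S` around `p`. -/
structure IsLocalParam {D : ℕ} (S : Set (EuclideanSpace ℝ (Fin D))) (n : ℕ)
    (φ : EuclideanSpace ℝ (Fin n) → EuclideanSpace ℝ (Fin D))
    (U : Set (EuclideanSpace ℝ (Fin n))) (p : EuclideanSpace ℝ (Fin D)) : Prop where
  isOpen : IsOpen U
  smooth : ContDiffOn ℝ (⊤ : ℕ∞) φ U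
  immersion : ∀ x ∈ U, Function.Injective (fderivWithin ℝ φ U x)
  injOn : Set.InjOn φ U
  openImage : ∃ V, IsOpen V ∧ φ '' U = S ∩ V
  mem : p ∈ φ '' U
  embedding : ∃ ψ, ContinuousOn ψ (φ '' U) ∧ ∀ x ∈ U, ψ (φ x) = x

/-- `S ⊆ ℝ^D` is an `n`-dimensional smooth embedded submanifold. -/
def IsSubmanifold {D : ℕ} (S : Set (EuclideanSpace ℝ (Fin D))) (n : ℕ) : Prop :=
  ∀ p ∈ S, ∃ φ U, IsLocalParam S n φ U p

/-- The nullity space at `p` of the second fundamental form `α` of `S`, viewed as a submanifold of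
the space form of kind `k`:  a tangent vector `v` is in the nullity iff `α(v, w) = 0` for all
`w ∈ T_pS`; concretely, iff for every smooth tangent vector field `W` along a smooth curve `c` in
`S` with `c(0) = p`, `c'(0) = v`, the derivative `W'(0)` has no component normal to `S` inside the
space form, i.e. `W'(0)` lies in the sum of `T_pS` and the normal space of the space form itself. -/
def nullityAt (k : SpaceFormKind) {D : ℕ} (S : Set (EuclideanSpace ℝ (Fin D)))
    (p : EuclideanSpace ℝ (Fin D)) : Set (EuclideanSpace ℝ (Fin D)) :=
  {v | v ∈ TangentAt S p ∧ ∀ c W : ℝ → EuclideanSpace ℝ (Fin D),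
    ContDiff ℝ (⊤ : ℕ∞) c → (∀ t, c t ∈ S) → c 0 = p → deriv c 0 = v →
    ContDiff ℝ (⊤ : ℕ∞) W → (∀ t, W t ∈ TangentAt S (c t)) →
    deriv W 0 ∈ TangentAt S p ⊔ radialAt k p}

/-- The index of nullity of `S` at `p`. -/
def nullityIndex (k : SpaceFormKind) {D : ℕ} (S : Set (EuclideanSpace ℝ (Fin D)))
    (p : EuclideanSpace ℝ (Fin D)) : ℕ :=
  Set.finrank ℝ (nullityAt k S p)

/-- `γ : ℝ → ℝ^D` is a geodesic of the Riemannian (resp. Lorentzian-induced) submanifold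
`S` of the space form of kind `k`: a smooth curve in `S` whose acceleration is orthogonal,
with respect to the ambient bilinear form, to all tangent spaces of `S`. -/
structure IsGeodesicOn (k : SpaceFormKind) {D : ℕ} (S : Set (EuclideanSpace ℝ (Fin D)))
    (γ : ℝ → EuclideanSpace ℝ (Fin D)) : Prop where
  smooth : ContDiff ℝ (⊤ : ℕ∞) γ
  mem : ∀ t, γ t ∈ S
  accel_normal : ∀ t, ∀ v ∈ TangentAt S (γ t), aForm k (deriv (deriv γ) t) v = 0

/-- `S` is a (geodesically, equivalently metrically) complete Riemannian manifold: every
initial condition gives rise to a geodesic defined on all of `ℝ`. -/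
def GeodComplete (k : SpaceFormKind) {D : ℕ} (S : Set (EuclideanSpace ℝ (Fin D))) : Prop :=
  ∀ p ∈ S, ∀ v ∈ TangentAt S p, ∃ γ, IsGeodesicOn k S γ ∧ γ 0 = p ∧ deriv γ 0 = v

/-- The set of points of `S` where the index of nullity is minimal. -/
def minNullitySet (k : SpaceFormKind) {D : ℕ} (S : Set (EuclideanSpace ℝ (Fin D))) :
    Set (EuclideanSpace ℝ (Fin D)) :=
  {q | q ∈ S ∧ ∀ r ∈ S, nullityIndex k S q ≤ nullityIndex k S r}

/-- The maximal integral manifold (leaf) through `p` of the nullity distribution of `S`,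
restricted to the subset `A`: all points reachable from `p` by smooth curves inside `A`
everywhere tangent to the nullity distribution. -/
def leafThrough (k : SpaceFormKind) {D : ℕ} (S A : Set (EuclideanSpace ℝ (Fin D)))
    (p : EuclideanSpace ℝ (Fin D)) : Set (EuclideanSpace ℝ (Fin D)) :=
  {q | ∃ c : ℝ → EuclideanSpace ℝ (Fin D), ContDiff ℝ (⊤ : ℕ∞) c ∧ (∀ t, c t ∈ A) ∧
    (∀ t, deriv c t ∈ nullityAt k S (c t)) ∧ c 0 = p ∧ c 1 = q}

/-- The dimension of the ambient linear space: `n + k` for a submanifold `M^n ⊆ ℝ^{n+k}`,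
`n + k + 1` for `M^n ⊆ S^{n+k} ⊆ ℝ^{n+k+1}` and for `M^n ⊆ H^{n+k} ⊆ ℝ^{n+k,1}`. -/
def ambientDim (k : SpaceFormKind) (n codim : ℕ) : ℕ :=
  match k with
  | .euclidean => n + codim
  | _ => n + codim + 1

/-!
Let `G x` be the orthogonal projection onto the tangent space `T_x X` of a submanifold `X` of a
Euclidean space. A tangent vector lies in the nullity of the second fundamental form if and only
if the derivative of `G` vanishes on it. For a submanifold of the sphere or of hyperbolic space
one replaces it by the cone over it, whose nullity is that of the submanifold plus the radial
line.

Where the index of nullity is minimal, `G` has maximal rank, so by the constant rank theorem the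
leaves of the nullity distribution are locally open pieces of affine subspaces, along which `G`
and the nullity are constant. A geodesic with initial velocity `v` in the nullity at `q` therefore
starts out along the model geodesic `c = cs • q + sn • v`. To see that the index of nullity cannot
jump at the end `t₁` of an interval on which this holds, vary `q` to `x s` and `v` to `V s` in the
nullity at `x s`. Then `G (cs t • x s + sn t • V s) = G (x s)` for `t < t₁`, so differentiating at
`s = 0` shows that the range of the derivative of `G` at `q` is contained in its range at `c t`,
and in the limit in its range at `c t₁`. Hence the rank is still maximal at `c t₁`, and uniqueness
of geodesics continues the identity with `c` beyond `t₁`.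
-/

section

open Filter Topology
open scoped ContDiff

local notation "𝔼" D:max => EuclideanSpace ℝ (Fin D)

section Continuation

theorem forall_of_eventually_of_closure {α : Type*} [TopologicalSpace α] [PreconnectedSpace α]
    [LocallyConnectedSpace α] {Q : α → Prop} {a : α} (ha : Q a)
    (hopen : ∀ x, Q x → ∀ᶠ y in 𝓝 x, Q y)
    (hclosure : ∀ C, IsPreconnected C → a ∈ C → (∀ y ∈ C, Q y) → ∀ x ∈ closure C, Q x) (x : α) :
    Q x := by
  set C := connectedComponentIn {y | Q y} a
  have hCQ : C ⊆ {y | Q y} := connectedComponentIn_subset _ _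
  have haC : a ∈ C := mem_connectedComponentIn ha
  have hC : IsPreconnected C := isPreconnected_connectedComponentIn
  have hC_open : IsOpen C := (isOpen_iff_eventually.2 hopen).connectedComponentIn
  have hC_closed : IsClosed C := isClosed_of_closure_subset <|
    hC.closure.subset_connectedComponentIn (subset_closure haC) (hclosure C hC haC hCQ)
  exact hCQ (IsClopen.eq_univ ⟨hC_closed, hC_open⟩ ⟨a, haC⟩ ▸ mem_univ x)

end Continuation

section Projections

variable {E F G : Type*} [NormedAddCommGroup E] [NormedSpace ℝ E]
  [NormedAddCommGroup F] [NormedSpace ℝ F] [NormedAddCommGroup G] [NormedSpace ℝ G]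

theorem deriv_eq_zero_of_isStarProjection {A : Type*} [NormedRing A] [NormedAlgebra ℝ A]
    [StarRing A] [ContinuousStar A] [StarModule ℝ A] {p : G → A} {p' : G →L[ℝ] A} {u w : G}
    (hp : ∀ u, IsStarProjection (p u)) (hp' : HasFDerivAt p p' u) (h : p' w * p u = 0) :
    p' w = 0 := by
  have hstar : star (p' w) = p' w := by
    have h1 : HasFDerivAt p (((starL' ℝ : A ≃L[ℝ] A) : A →L[ℝ] A) ∘L p') u := by
      simpa only [(hp _).isSelfAdjoint.star_eq] using hp'.star
    exact DFunLike.congr_fun (h1.unique hp') w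
  have hleibniz : p u * p' w + p' w * p u = p' w := by
    have h1 := hp'.mul' hp'
    rw [show p * p = p from funext fun u => (hp u).isIdempotentElem.eq] at h1
    simpa using DFunLike.congr_fun (h1.unique hp') w
  have h' : p u * p' w = 0 := by
    simpa only [star_mul, hstar, (hp u).isSelfAdjoint.star_eq, star_zero] using congrArg star h
  rw [← hleibniz, h, h', add_zero]

theorem isInvertible_of_injective_of_finrank_eq [FiniteDimensional ℝ E] [FiniteDimensional ℝ F]
    {A : E →L[ℝ] F} (hA : Function.Injective A)
    (h : Module.finrank ℝ E = Module.finrank ℝ F) : A.IsInvertible :=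
  ⟨(LinearEquiv.ofInjectiveOfFinrankEq (A : E →ₗ[ℝ] F) hA h).toContinuousLinearEquiv, by
    ext x; rfl⟩

theorem finrank_continuousLinearMap_real [FiniteDimensional ℝ E] :
    Module.finrank ℝ (E →L[ℝ] ℝ) = Module.finrank ℝ E := by
  rw [← (LinearMap.toContinuousLinearMap (𝕜 := ℝ) (E := E) (F' := ℝ)).finrank_eq]
  exact Subspace.dual_finrank_eq

/-- The pull-back of the bilinear form `β` along `A`, as a map into the dual. -/
def pullbackForm (β : F →L[ℝ] F →L[ℝ] ℝ) (A : E →L[ℝ] F) : E →L[ℝ] E →L[ℝ] ℝ :=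
  ((ContinuousLinearMap.compL ℝ E F ℝ).flip A) ∘L β ∘L A

/-- The projection onto the range of `A` along its orthogonal complement with respect to the
bilinear form `β`; a junk value unless `β` is nondegenerate on the range of `A`. -/
def formProj (β : F →L[ℝ] F →L[ℝ] ℝ) (A : E →L[ℝ] F) : F →L[ℝ] F :=
  A ∘L (pullbackForm β A).inverse ∘L ((ContinuousLinearMap.compL ℝ E F ℝ).flip A) ∘L β

variable {β : F →L[ℝ] F →L[ℝ] ℝ} {A : E →L[ℝ] F}

theorem isInvertible_pullbackForm [FiniteDimensional ℝ E]
    (h : ∀ w, (∀ w', β (A w) (A w') = 0) → w = 0) : (pullbackForm β A).IsInvertible := by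
  refine isInvertible_of_injective_of_finrank_eq ?_ finrank_continuousLinearMap_real.symm
  exact (injective_iff_map_eq_zero _).2 fun w hw => h w fun w' => DFunLike.congr_fun hw w'

theorem formProj_apply_mem (x : F) : formProj β A x ∈ LinearMap.range (A : E →ₗ[ℝ] F) := ⟨_, rfl⟩

theorem formProj_apply_self (h : (pullbackForm β A).IsInvertible) (w : E) :
    formProj β A (A w) = A w :=
  congrArg A (h.inverse_apply_self w)

theorem formProj_eq_zero {x : F} (hx : ∀ w, β x (A w) = 0) : formProj β A x = 0 := by
  have : (ContinuousLinearMap.compL ℝ E F ℝ).flip A (β x) = 0 := by ext w; exact hx w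
  simp only [formProj, ContinuousLinearMap.comp_apply, this, map_zero]

theorem form_sub_formProj (h : (pullbackForm β A).IsInvertible) (x : F) (w : E) :
    β (x - formProj β A x) (A w) = 0 := by
  have := DFunLike.congr_fun (h.self_apply_inverse
    ((ContinuousLinearMap.compL ℝ E F ℝ).flip A (β x))) w
  rw [map_sub, sub_apply, sub_eq_zero]
  exact this.symm

theorem formProj_contDiffAt [CompleteSpace E] {n : WithTop ℕ∞} {A : G → E →L[ℝ] F} {u : G}
    (hA : ContDiffAt ℝ n A u) (h : (pullbackForm β (A u)).IsInvertible) :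
    ContDiffAt ℝ n (fun u => formProj β (A u)) u := by
  have hdual : ContDiffAt ℝ n (fun u => (ContinuousLinearMap.compL ℝ E F ℝ).flip (A u)) u :=
    ContinuousLinearMap.contDiff _ |>.contDiffAt.comp u hA
  have hpull : ContDiffAt ℝ n (fun u => pullbackForm β (A u)) u :=
    hdual.clm_comp (contDiffAt_const.clm_comp hA)
  have hinv : ContDiffAt ℝ n (fun u => (pullbackForm β (A u)).inverse) u :=
    ContDiffAt.comp (g := ContinuousLinearMap.inverse) u h.contDiffAt_map_inverse hpull
  exact hA.clm_comp (hinv.clm_comp (hdual.clm_comp contDiffAt_const))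

theorem starProjection_range_contDiffAt {F : Type*} [NormedAddCommGroup F]
    [InnerProductSpace ℝ F] [FiniteDimensional ℝ F] [FiniteDimensional ℝ E] {n : WithTop ℕ∞}
    {A : G → E →L[ℝ] F} {u : G} (hA : ContDiffAt ℝ n A u)
    (hinj : ∀ᶠ u in 𝓝 u, Function.Injective (A u)) :
    ContDiffAt ℝ n (fun u => (LinearMap.range (A u : E →ₗ[ℝ] F)).starProjection) u := by
  have : CompleteSpace E := FiniteDimensional.complete ℝ E
  have hinv (u) (hu : Function.Injective (A u)) : (pullbackForm (innerSL ℝ) (A u)).IsInvertible :=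
    isInvertible_pullbackForm fun w hw => (map_eq_zero_iff _ hu).1 (inner_self_eq_zero.1 (hw w))
  refine (formProj_contDiffAt hA (hinv u hinj.self_of_nhds)).congr_of_eventuallyEq ?_
  filter_upwards [hinj] with u hu
  ext1 x
  refine Submodule.eq_starProjection_of_mem_of_inner_eq_zero (formProj_apply_mem x) ?_
  rintro _ ⟨w, rfl⟩
  exact form_sub_formProj (hinv u hu) x w

end Projections

section InverseFunction

variable {E H : Type*} [NormedAddCommGroup E] [NormedSpace ℝ E] [CompleteSpace E]
  [NormedAddCommGroup H] [NormedSpace ℝ H]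

theorem exists_openPartialHomeomorph_contDiffAt_symm {h : E → H} {U : Set E} {u : E}
    (hU : IsOpen U) (hu : u ∈ U) (hh : ∀ x ∈ U, ContDiffAt ℝ ∞ h x)
    (hinv : (fderiv ℝ h u).IsInvertible) :
    ∃ e : OpenPartialHomeomorph E H, u ∈ e.source ∧ e.source ⊆ U ∧ ⇑e = h ∧
      ∀ x ∈ e.source, (fderiv ℝ h x).IsInvertible ∧ ContDiffAt ℝ ∞ e.symm (h x) := by
  obtain ⟨L, hL⟩ := hinv
  have hd : HasFDerivAt h (L : E →L[ℝ] H) u :=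
    hL ▸ ((hh u hu).differentiableAt (by simp)).hasFDerivAt
  let e₀ := (hh u hu).toOpenPartialHomeomorph h hd (by simp)
  let W := U ∩ fderiv ℝ h ⁻¹' range ((↑) : (E ≃L[ℝ] H) → E →L[ℝ] H)
  have hW : IsOpen W := by
    refine ContinuousOn.isOpen_inter_preimage (fun x hx => ContinuousAt.continuousWithinAt ?_)
      hU ContinuousLinearEquiv.isOpen
    exact ((hh x hx).fderiv_right (m := 0) (by simp)).continuousAt
  refine ⟨e₀.restrOpen W hW, ⟨ContDiffAt.mem_toOpenPartialHomeomorph_source _ hd _, hu, L, hL⟩,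
    fun x hx => hx.2.1, rfl, fun x hx => ?_⟩
  obtain ⟨hx₀, hxU, L', hL'⟩ := hx
  have hsymm : e₀.symm (h x) = x := e₀.left_inv hx₀
  refine ⟨⟨L', hL'⟩, e₀.contDiffAt_symm (f₀' := L') (e₀.map_source hx₀) ?_ ?_⟩ <;> rw [hsymm]
  · exact hL' ▸ ((hh x hxU).differentiableAt (by simp)).hasFDerivAt
  · exact hh x hxU

end InverseFunction

section ConstantRank

theorem sub_mem_of_fderiv_apply_mem {Z F : Type*} [NormedAddCommGroup Z] [NormedSpace ℝ Z]
    [NormedAddCommGroup F] [NormedSpace ℝ F] {f : Z → F} {C : Set Z} (hC : IsOpen C)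
    (hC' : IsPreconnected C) {W : Submodule ℝ F} (hW : W.ClosedComplemented)
    (hf : DifferentiableOn ℝ f C) (hfW : ∀ z ∈ C, ∀ ζ, fderiv ℝ f z ζ ∈ W) {z z' : Z} (hz : z ∈ C)
    (hz' : z' ∈ C) : f z' - f z ∈ W := by
  obtain ⟨π, hπ⟩ := hW
  let L : F →L[ℝ] F := .id ℝ F - W.subtypeL ∘L π
  have hd : ∀ z ∈ C, HasFDerivAt (fun z => L (f z)) 0 z := fun z hz => by
    refine (L.hasFDerivAt.comp z
      (hf.differentiableAt (hC.mem_nhds hz)).hasFDerivAt).congr_fderiv ?_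
    ext1 ζ
    simp [L, hπ ⟨_, hfW z hz ζ⟩]
  have heq : L (f z') = L (f z) := hC.is_const_of_fderiv_eq_zero (𝕜 := ℝ) hC'
    (fun z hz => (hd z hz).differentiableAt.differentiableWithinAt)
    (fun z hz => (hd z hz).fderiv) hz' hz
  have hsub : f z' - f z = π (f z' - f z) := by
    have heq' : f z' - π (f z') = f z - π (f z) := heq
    rw [map_sub, Submodule.coe_sub]
    exact sub_eq_sub_iff_sub_eq_sub.1 heq'
  exact hsub ▸ (π (f z' - f z)).2

variable {E M Y Z : Type*} [NormedAddCommGroup E] [NormedSpace ℝ E]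
  [NormedAddCommGroup M] [NormedSpace ℝ M] [NormedAddCommGroup Y] [NormedSpace ℝ Y]
  [NormedAddCommGroup Z] [NormedSpace ℝ Z]

/-- A chart straightening the fibres of a map `Γ` of constant rank: in the coordinates `e`, the map
`Γ` depends only on the first coordinate, while the second one is the prescribed function `f`. -/
structure IsRankChart (Γ : E → M) (f : E → Z) (e : OpenPartialHomeomorph E (Y × Z)) : Prop where
  differentiableAt : ∀ u ∈ e.source, DifferentiableAt ℝ Γ u
  contDiffAt : ∀ u ∈ e.source, ContDiffAt ℝ ∞ e u
  isInvertible_fderiv : ∀ u ∈ e.source, (fderiv ℝ e u).IsInvertible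
  snd_apply : ∀ u, (e u).2 = f u
  fderiv_fst_eq_zero_iff : ∀ u ∈ e.source, ∀ w, (fderiv ℝ e u w).1 = 0 ↔ fderiv ℝ Γ u w = 0
  isPreconnected_slice : ∀ y, IsPreconnected {z | (y, z) ∈ e.target}

theorem ker_comp_eq_ker_of_finrank_le [FiniteDimensional ℝ E] [FiniteDimensional ℝ Z]
    {A : E →L[ℝ] M} {π : M →L[ℝ] Y} {g : E →L[ℝ] Z} (hinj : ∀ w, π (A w) = 0 → g w = 0 → w = 0)
    (hfinrank : Module.finrank ℝ Z ≤ Module.finrank ℝ A.ker) {w : E} :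
    π (A w) = 0 ↔ A w = 0 := by
  have hle : A.ker ≤ (π ∘L A).ker := fun w hw => by
    simpa using! congrArg π hw
  have hinj' : Function.Injective ((g : E →ₗ[ℝ] Z).comp (π ∘L A).ker.subtype) :=
    (injective_iff_map_eq_zero _).2 fun w hw => Subtype.ext (hinj w w.2 hw)
  have heq := Submodule.eq_of_le_of_finrank_le hle
    ((LinearMap.finrank_le_finrank_of_injective hinj').trans hfinrank)
  exact (SetLike.ext_iff.1 heq w).symm

theorem exists_restr_convex_target {E H : Type*} [TopologicalSpace E] [NormedAddCommGroup H]
    [NormedSpace ℝ H] (e : OpenPartialHomeomorph E H) {u : E} (hu : u ∈ e.source) :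
    ∃ e' : OpenPartialHomeomorph E H, u ∈ e'.source ∧ e'.source ⊆ e.source ∧ ⇑e' = e ∧
      Convex ℝ e'.target := by
  obtain ⟨ε, hε, hball⟩ := Metric.isOpen_iff.1 e.open_target (e u) (e.map_source hu)
  let e' := (e.symm.restrOpen (Metric.ball (e u) ε) Metric.isOpen_ball).symm
  have hsource : e'.source = e.source ∩ e ⁻¹' Metric.ball (e u) ε := by
    simp [e']
  have htarget : e'.target = Metric.ball (e u) ε := inter_eq_right.2 hball
  exact ⟨e', hsource ▸ ⟨hu, Metric.mem_ball_self hε⟩, hsource ▸ inter_subset_left, rfl,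
    htarget ▸ convex_ball _ _⟩

theorem convex_slice {B : Set (Y × Z)} (hB : Convex ℝ B) (y : Y) : Convex ℝ {z | (y, z) ∈ B} :=
  fun z hz z' hz' a b ha hb hab => by
    simpa [← add_smul, hab] using hB hz hz' ha hb hab

theorem exists_isRankChart [FiniteDimensional ℝ E] [FiniteDimensional ℝ Z] {Γ : E → M} {f : E → Z}
    {U : Set E} {u : E} (hU : IsOpen U) (hu : u ∈ U)
    (hΓ : ∀ x ∈ U, ContDiffAt ℝ ∞ Γ x) (hf : ∀ x ∈ U, ContDiffAt ℝ ∞ f x)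
    (hinj : ∀ w, fderiv ℝ Γ u w = 0 → fderiv ℝ f u w = 0 → w = 0)
    (hfinrank : Module.finrank ℝ Z = Module.finrank ℝ (fderiv ℝ Γ u).ker)
    (hmin : ∀ x ∈ U, Module.finrank ℝ (fderiv ℝ Γ u).ker ≤ Module.finrank ℝ (fderiv ℝ Γ x).ker) :
    ∃ (r : ℕ) (e : OpenPartialHomeomorph E (𝔼 r × Z)),
      u ∈ e.source ∧ e.source ⊆ U ∧ IsRankChart Γ f e := by
  have : CompleteSpace E := FiniteDimensional.complete ℝ E
  obtain ⟨π₀, hπ₀⟩ := Submodule.ClosedComplemented.of_finiteDimensional (fderiv ℝ Γ u).range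
  set r := Module.finrank ℝ (fderiv ℝ Γ u).range with hr
  let ι : (fderiv ℝ Γ u).range ≃L[ℝ] 𝔼 r := .ofFinrankEq finrank_euclideanSpace_fin.symm
  let π : M →L[ℝ] 𝔼 r := (ι : (fderiv ℝ Γ u).range →L[ℝ] 𝔼 r) ∘L π₀
  have hπ : ∀ w, π (fderiv ℝ Γ u w) = 0 → fderiv ℝ Γ u w = 0 := fun w hw =>
    congrArg Subtype.val ((hπ₀ ⟨_, w, rfl⟩).symm.trans ((map_eq_zero_iff ι ι.injective).1 hw))
  let h (x : E) := (π (Γ x), f x)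
  have hh : ∀ x ∈ U, ContDiffAt ℝ ∞ h x := fun x hx =>
    (π.contDiff.contDiffAt.comp x (hΓ x hx)).prodMk (hf x hx)
  have hdh : ∀ x ∈ U, ∀ w, fderiv ℝ h x w = (π (fderiv ℝ Γ x w), fderiv ℝ f x w) := fun x hx w =>
    DFunLike.congr_fun ((π.hasFDerivAt.comp x
      ((hΓ x hx).differentiableAt (by simp)).hasFDerivAt).prodMk
        ((hf x hx).differentiableAt (by simp)).hasFDerivAt).fderiv w
  have hinv : (fderiv ℝ h u).IsInvertible := by
    refine isInvertible_of_injective_of_finrank_eq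
      ((injective_iff_map_eq_zero _).2 fun w hw => ?_) ?_
    · rw [hdh u hu, Prod.mk_eq_zero] at hw
      exact hinj w (hπ w hw.1) hw.2
    · rw [Module.finrank_prod, hfinrank, finrank_euclideanSpace_fin, hr]
      exact ((fderiv ℝ Γ u : E →ₗ[ℝ] M).finrank_range_add_finrank_ker).symm
  obtain ⟨e₀, hue₀, he₀U, he₀, he₀_inv⟩ :=
    exists_openPartialHomeomorph_contDiffAt_symm hU hu hh hinv
  obtain ⟨e, hue, hee₀, he, he_convex⟩ := exists_restr_convex_target e₀ hue₀
  rw [he₀] at he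
  have heU := hee₀.trans he₀U
  refine ⟨r, e, hue, heU, ⟨fun x hx => (hΓ x (heU hx)).differentiableAt (by simp),
    fun x hx => he ▸ hh x (heU hx), fun x hx => he ▸ (he₀_inv x (hee₀ hx)).1, fun x => he ▸ rfl,
    fun x hx w => ?_, fun y => (convex_slice he_convex y).isPreconnected⟩⟩
  rw [he, hdh x (heU hx)]
  refine ker_comp_eq_ker_of_finrank_le (g := fderiv ℝ f x) (fun w hΓw hfw => ?_)
    (hfinrank.trans_le (hmin x (heU hx)))
  refine (map_eq_zero_iff _ (he₀_inv x (hee₀ hx)).1.injective).1 ?_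
  rw [hdh x (heU hx), hΓw, hfw, Prod.mk_zero_zero]

namespace IsRankChart

variable {Γ : E → M} {f : E → Z} {e : OpenPartialHomeomorph E (Y × Z)} {u u' : E}

theorem hasFDerivAt_comp_symm (he : IsRankChart Γ f e) {F : Type*} [NormedAddCommGroup F]
    [NormedSpace ℝ F] {g : E → F} (hu : u ∈ e.source) (hg : DifferentiableAt ℝ g u) :
    HasFDerivAt (g ∘ e.symm) (fderiv ℝ g u ∘L (fderiv ℝ e u).inverse) (e u) := by
  obtain ⟨L, hL⟩ := he.isInvertible_fderiv u hu
  have hsymm : e.symm (e u) = u := e.left_inv hu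
  have hd : HasFDerivAt e (L : E →L[ℝ] Y × Z) (e.symm (e u)) := by
    rw [hsymm, hL]
    exact ((he.contDiffAt u hu).differentiableAt (by simp)).hasFDerivAt
  rw [← hL, ContinuousLinearMap.inverse_equiv]
  refine HasFDerivAt.comp (e u) ?_ (e.hasFDerivAt_symm (e.map_source hu) hd)
  rw [hsymm]
  exact hg.hasFDerivAt

theorem fderiv_inverse_inr (he : IsRankChart Γ f e) (hu : u ∈ e.source) (ζ : Z) :
    fderiv ℝ Γ u ((fderiv ℝ e u).inverse (0, ζ)) = 0 := by
  rw [← he.fderiv_fst_eq_zero_iff u hu, (he.isInvertible_fderiv u hu).self_apply_inverse]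

theorem sub_mem_of_fst_eq (he : IsRankChart Γ f e) {F : Type*} [NormedAddCommGroup F]
    [NormedSpace ℝ F] {g : E → F} (hg : ∀ x ∈ e.source, DifferentiableAt ℝ g x)
    {W : Submodule ℝ F} (hW : W.ClosedComplemented) (hu : u ∈ e.source) (hu' : u' ∈ e.source)
    (hfst : (e u).1 = (e u').1)
    (hgW : ∀ x ∈ e.source, (e x).1 = (e u).1 → ∀ w, fderiv ℝ Γ x w = 0 → fderiv ℝ g x w ∈ W) :
    g u' - g u ∈ W := by
  set C := {z | ((e u).1, z) ∈ e.target}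
  have hC : IsOpen C := e.open_target.preimage (Continuous.prodMk_right _)
  have hd : ∀ z ∈ C, HasFDerivAt (fun z => g (e.symm ((e u).1, z)))
      ((fderiv ℝ g (e.symm ((e u).1, z)) ∘L (fderiv ℝ e (e.symm ((e u).1, z))).inverse) ∘L
        .inr ℝ Y Z) z := fun z hz => by
    have hz' := e.map_target hz
    refine HasFDerivAt.comp (g := g ∘ e.symm) z ?_ (hasFDerivAt_prodMk_right _ z)
    simpa only [e.right_inv hz] using he.hasFDerivAt_comp_symm hz' (hg _ hz')
  have key := sub_mem_of_fderiv_apply_mem hC (he.isPreconnected_slice _) hW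
    (fun z hz => (hd z hz).differentiableAt.differentiableWithinAt) (fun z hz ζ => ?_)
    (z := (e u).2) (z' := (e u').2) (e.map_source hu) (by simpa [C, hfst] using e.map_source hu')
  · rwa [hfst, e.left_inv hu', ← hfst, e.left_inv hu] at key
  · have hz' := e.map_target hz
    rw [(hd z hz).fderiv]
    exact hgW _ hz' (by rw [e.right_inv hz]) _ (he.fderiv_inverse_inr hz' ζ)

theorem apply_eq_of_fst_eq (he : IsRankChart Γ f e) (hu : u ∈ e.source) (hu' : u' ∈ e.source)
    (hfst : (e u).1 = (e u').1) : Γ u' = Γ u :=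
  sub_eq_zero.1 <| he.sub_mem_of_fst_eq he.differentiableAt Submodule.closedComplemented_bot
    hu hu' hfst fun _ _ _ _ hw => hw

theorem range_fderiv_le_of_fst_eq (he : IsRankChart Γ f e) (hu : u ∈ e.source)
    (hu' : u' ∈ e.source) (hfst : (e u).1 = (e u').1) :
    (fderiv ℝ Γ u).range ≤ (fderiv ℝ Γ u').range := by
  have hd : ∀ x ∈ e.source, HasFDerivAt (fun y => Γ (e.symm (y, (e x).2)))
      ((fderiv ℝ Γ x ∘L (fderiv ℝ e x).inverse) ∘L .inl ℝ Y Z) (e x).1 := fun x hx =>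
    HasFDerivAt.comp (g := Γ ∘ e.symm) (e x).1
      (he.hasFDerivAt_comp_symm hx (he.differentiableAt x hx)) (hasFDerivAt_prodMk_left _ _)
  have hmem : ∀ x ∈ e.source, ∀ᶠ y in 𝓝 (e x).1, (y, (e x).2) ∈ e.target := fun x hx =>
    (Continuous.prodMk_left (e x).2).continuousAt.eventually
      (e.open_target.mem_nhds (e.map_source hx))
  have heq : (fun y => Γ (e.symm (y, (e u').2))) =ᶠ[𝓝 (e u).1]
      fun y => Γ (e.symm (y, (e u).2)) := by
    filter_upwards [hmem u hu, hfst ▸ hmem u' hu'] with y hy hy'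
    exact he.apply_eq_of_fst_eq (e.map_target hy) (e.map_target hy') (by
      rw [e.right_inv hy, e.right_inv hy'])
  rintro _ ⟨w, rfl⟩
  set y := (fderiv ℝ e u w).1
  refine ⟨(fderiv ℝ e u').inverse (y, 0), ?_⟩
  have hinl := DFunLike.congr_fun
    (((hd u hu).congr_of_eventuallyEq heq).unique (hfst ▸ hd u' hu')) y
  have hinr := he.fderiv_inverse_inr hu (fderiv ℝ e u w).2
  have hw : (y, (fderiv ℝ e u w).2) = fderiv ℝ e u w := rfl
  have hsplit : w = (fderiv ℝ e u).inverse (y, 0) +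
      (fderiv ℝ e u).inverse (0, (fderiv ℝ e u w).2) := by
    rw [← map_add, Prod.mk_add_mk, add_zero, zero_add, hw,
      (he.isInvertible_fderiv u hu).inverse_apply_self]
  change fderiv ℝ Γ u' _ = fderiv ℝ Γ u w
  rw [hsplit, map_add, hinr, add_zero]
  exact hinl.symm

end IsRankChart

end ConstantRank

section GaussMap

theorem exists_contDiff_curve {E : Type*} [NormedAddCommGroup E] [NormedSpace ℝ E] {U : Set E}
    {u : E} (hU : U ∈ 𝓝 u) (w : E) :
    ∃ c : ℝ → E, ContDiff ℝ ∞ c ∧ (∀ t, c t ∈ U) ∧ c 0 = u ∧ HasDerivAt c w 0 := by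
  obtain ⟨δ, hδ, hball⟩ := Metric.mem_nhds_iff.1 hU
  obtain ⟨ε, hε, hεw⟩ : ∃ ε > 0, ε * ‖w‖ < δ := by
    refine ⟨δ / (‖w‖ + 1), by positivity, ?_⟩
    rw [div_mul_eq_mul_div, div_lt_iff₀ (by positivity)]
    nlinarith
  refine ⟨fun t => u + (ε * Real.sin (t / ε)) • w, by fun_prop, fun t => hball ?_, by simp, ?_⟩
  · rw [Metric.mem_ball, dist_self_add_left, norm_smul, norm_mul, Real.norm_eq_abs,
      Real.norm_eq_abs, abs_of_pos hε]
    refine lt_of_le_of_lt ?_ hεw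
    gcongr
    exact mul_le_of_le_one_right hε.le (Real.abs_sin_le_one _)
  · have hsin := ((hasDerivAt_id (0 : ℝ)).div_const ε).sin.const_mul ε
    have hone : ε * (Real.cos (id 0 / ε) * (1 / ε)) = 1 := by
      simp [hε.ne']
    rw [hone] at hsin
    simpa using (hsin.smul_const w).const_add u

variable {D : ℕ}

/-- The Gauss map of a subset of `ℝ^D`, the tangent space at `x` being encoded by the orthogonal
projection onto it. -/
def gaussMap (X : Set (𝔼 D)) (x : 𝔼 D) : 𝔼 D →L[ℝ] 𝔼 D := (TangentAt X x).starProjection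

/-- The image of the differential of the Gauss map at `x`. -/
def gaussDeriv (X : Set (𝔼 D)) (x : 𝔼 D) : Submodule ℝ (𝔼 D →L[ℝ] 𝔼 D) :=
  Submodule.span ℝ {B | ∃ c : ℝ → 𝔼 D, ContDiff ℝ ∞ c ∧ (∀ t, c t ∈ X) ∧ c 0 = x ∧
    deriv (gaussMap X ∘ c) 0 = B}

/-- The nullity space of the second fundamental form of a submanifold `X` of Euclidean space,
computed from the Gauss map. -/
def gaussNullity (X : Set (𝔼 D)) (x : 𝔼 D) : Submodule ℝ (𝔼 D) :=
  TangentAt X x ⊓ ⨅ B ∈ gaussDeriv X x, LinearMap.ker (B : 𝔼 D →ₗ[ℝ] 𝔼 D)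

theorem mem_gaussNullity {X : Set (𝔼 D)} {x v : 𝔼 D} :
    v ∈ gaussNullity X x ↔ v ∈ TangentAt X x ∧ ∀ B ∈ gaussDeriv X x, B v = 0 := by
  simp [gaussNullity, Submodule.mem_iInf]

theorem gaussMap_eq_self_iff {X : Set (𝔼 D)} {x v : 𝔼 D} :
    gaussMap X x v = v ↔ v ∈ TangentAt X x :=
  Submodule.starProjection_eq_self_iff

theorem tangentAt_eq_of_gaussMap_eq {X : Set (𝔼 D)} {x y : 𝔼 D}
    (h : gaussMap X x = gaussMap X y) : TangentAt X x = TangentAt X y := by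
  ext v
  rw [← gaussMap_eq_self_iff, h, gaussMap_eq_self_iff]

variable {E : Type*} [NormedAddCommGroup E] [NormedSpace ℝ E]

/-- A smooth parametrization `φ : U → X` of an open part of a subset `X ⊆ ℝ^D` by an open subset of
a model space, whose inverse extends smoothly to a neighbourhood in `ℝ^D` of each point. -/
structure IsSmoothParam (X : Set (𝔼 D)) (φ : E → 𝔼 D) (U : Set E) : Prop where
  isOpen : IsOpen U
  contDiffAt : ∀ u ∈ U, ContDiffAt ℝ ∞ φ u
  mem : ∀ u ∈ U, φ u ∈ X
  injective_fderiv : ∀ u ∈ U, Function.Injective (fderiv ℝ φ u)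
  exists_leftInverse : ∀ u ∈ U, ∃ ψ : 𝔼 D → E, ContDiffAt ℝ ∞ ψ (φ u) ∧ ψ (φ u) = u ∧
    ∀ᶠ x in 𝓝[X] φ u, φ (ψ x) = x

namespace IsSmoothParam

variable {X : Set (𝔼 D)} {φ : E → 𝔼 D} {U : Set E} {u : E}

theorem hasFDerivAt (h : IsSmoothParam X φ U) (hu : u ∈ U) : HasFDerivAt φ (fderiv ℝ φ u) u :=
  ((h.contDiffAt u hu).differentiableAt (by simp)).hasFDerivAt

theorem exists_curve (h : IsSmoothParam X φ U) (hu : u ∈ U) (w : E) :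
    ∃ c : ℝ → E, ContDiff ℝ ∞ (φ ∘ c) ∧ (∀ t, c t ∈ U) ∧ c 0 = u ∧ HasDerivAt c w 0 := by
  obtain ⟨c, hc, hcU, hc0, hcw⟩ := exists_contDiff_curve (h.isOpen.mem_nhds hu) w
  exact ⟨c, contDiff_iff_contDiffAt.2 fun t => (h.contDiffAt _ (hcU t)).comp t hc.contDiffAt,
    hcU, hc0, hcw⟩

theorem exists_lift (h : IsSmoothParam X φ U) (hu : u ∈ U) {c : ℝ → 𝔼 D} {v : 𝔼 D} {t : ℝ}
    (hc : HasDerivAt c v t) (hcX : ∀ᶠ s in 𝓝 t, c s ∈ X) (hct : c t = φ u) :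
    ∃ (d : ℝ → E) (w : E), HasDerivAt d w t ∧ d t = u ∧ φ ∘ d =ᶠ[𝓝 t] c ∧
      fderiv ℝ φ u w = v := by
  obtain ⟨ψ, hψ, hψu, hψφ⟩ := h.exists_leftInverse u hu
  rw [← hct] at hψ hψφ
  have hd : HasDerivAt (ψ ∘ c) (fderiv ℝ ψ (c t) v) t :=
    (hψ.differentiableAt (by simp)).hasFDerivAt.comp_hasDerivAt t hc
  have hdt : (ψ ∘ c) t = u := by rw [Function.comp_apply, hct, hψu]
  have heq : φ ∘ ψ ∘ c =ᶠ[𝓝 t] c :=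
    (tendsto_nhdsWithin_iff.2 ⟨hc.continuousAt, hcX⟩).eventually hψφ
  exact ⟨ψ ∘ c, _, hd, hdt, heq, (((h.hasFDerivAt hu).comp_hasDerivAt_of_eq t hd
    hdt.symm).congr_of_eventuallyEq heq.symm).unique hc⟩

theorem tangentAt_eq (h : IsSmoothParam X φ U) (hu : u ∈ U) :
    TangentAt X (φ u) = LinearMap.range (fderiv ℝ φ u : E →ₗ[ℝ] 𝔼 D) := by
  refine le_antisymm (Submodule.span_le.2 ?_) ?_
  · rintro _ ⟨c, hc, hcX, hc0, rfl⟩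
    obtain ⟨-, w, -, -, -, hw⟩ := h.exists_lift hu (hc.differentiable (by simp) 0).hasDerivAt
      (.of_forall hcX) hc0
    exact ⟨w, hw⟩
  · rintro _ ⟨w, rfl⟩
    obtain ⟨c, hc, hcU, hc0, hcw⟩ := h.exists_curve hu w
    exact Submodule.subset_span ⟨φ ∘ c, hc, fun t => h.mem _ (hcU t), congrArg φ hc0,
      ((h.hasFDerivAt hu).comp_hasDerivAt_of_eq 0 hcw hc0.symm).deriv⟩

theorem fderiv_apply_mem (h : IsSmoothParam X φ U) (hu : u ∈ U) (w : E) :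
    fderiv ℝ φ u w ∈ TangentAt X (φ u) :=
  h.tangentAt_eq hu ▸ LinearMap.mem_range_self _ w

variable [FiniteDimensional ℝ E]

theorem gaussMap_contDiffAt (h : IsSmoothParam X φ U) (hu : u ∈ U) :
    ContDiffAt ℝ ∞ (gaussMap X ∘ φ) u := by
  have hU := h.isOpen.eventually_mem hu
  refine (starProjection_range_contDiffAt ((h.contDiffAt u hu).fderiv_right (by simp))
    (hU.mono h.injective_fderiv)).congr_of_eventuallyEq (hU.mono fun x hx => ?_)
  exact congrArg (fun T : Submodule ℝ (𝔼 D) => T.starProjection) (h.tangentAt_eq hx)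

theorem gaussMap_hasFDerivAt (h : IsSmoothParam X φ U) (hu : u ∈ U) :
    HasFDerivAt (gaussMap X ∘ φ) (fderiv ℝ (gaussMap X ∘ φ) u) u :=
  ((h.gaussMap_contDiffAt hu).differentiableAt (by simp)).hasFDerivAt

theorem exists_hasDerivAt_gaussMap (h : IsSmoothParam X φ U) (hu : u ∈ U) {c : ℝ → 𝔼 D} {v : 𝔼 D}
    {t : ℝ} (hc : HasDerivAt c v t) (hcX : ∀ᶠ s in 𝓝 t, c s ∈ X) (hct : c t = φ u) :
    ∃ w, fderiv ℝ φ u w = v ∧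
      HasDerivAt (gaussMap X ∘ c) (fderiv ℝ (gaussMap X ∘ φ) u w) t := by
  obtain ⟨d, w, hd, hdt, heq, hw⟩ := h.exists_lift hu hc hcX hct
  exact ⟨w, hw, ((h.gaussMap_hasFDerivAt hu).comp_hasDerivAt_of_eq t hd
    hdt.symm).congr_of_eventuallyEq (heq.symm.fun_comp (gaussMap X))⟩

theorem gaussDeriv_eq (h : IsSmoothParam X φ U) (hu : u ∈ U) :
    gaussDeriv X (φ u) =
      LinearMap.range (fderiv ℝ (gaussMap X ∘ φ) u : E →ₗ[ℝ] 𝔼 D →L[ℝ] 𝔼 D) := by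
  refine le_antisymm (Submodule.span_le.2 ?_) ?_
  · rintro _ ⟨c, hc, hcX, hc0, rfl⟩
    obtain ⟨w, -, hw⟩ := h.exists_hasDerivAt_gaussMap hu
      (hc.differentiable (by simp) 0).hasDerivAt (.of_forall hcX) hc0
    exact ⟨w, hw.deriv.symm⟩
  · rintro _ ⟨w, rfl⟩
    obtain ⟨c, hc, hcU, hc0, hcw⟩ := h.exists_curve hu w
    exact Submodule.subset_span ⟨φ ∘ c, hc, fun t => h.mem _ (hcU t), congrArg φ hc0,
      ((h.gaussMap_hasFDerivAt hu).comp_hasDerivAt_of_eq 0 hcw hc0.symm).deriv⟩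

theorem fderiv_gaussMap_comm (h : IsSmoothParam X φ U) (hu : u ∈ U) (w₁ w₂ : E) :
    fderiv ℝ (gaussMap X ∘ φ) u w₁ (fderiv ℝ φ u w₂) =
      fderiv ℝ (gaussMap X ∘ φ) u w₂ (fderiv ℝ φ u w₁) := by
  have hφ' : HasFDerivAt (fderiv ℝ φ) (fderiv ℝ (fderiv ℝ φ) u) u :=
    (((h.contDiffAt u hu).fderiv_right (m := ∞) (by simp)).differentiableAt (by simp)).hasFDerivAt
  have hsymm : IsSymmSndFDerivAt ℝ φ u :=
    ((h.contDiffAt u hu).of_le (WithTop.coe_le_coe.2 le_top : (2 : WithTop ℕ∞) ≤ ∞))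
      |>.isSymmSndFDerivAt (by simp)
  have hleibniz (a b : E) : fderiv ℝ (gaussMap X ∘ φ) u a (fderiv ℝ φ u b) =
      fderiv ℝ (fderiv ℝ φ) u a b - gaussMap X (φ u) (fderiv ℝ (fderiv ℝ φ) u a b) := by
    have hb : HasFDerivAt (fun x => fderiv ℝ φ x b) ((fderiv ℝ (fderiv ℝ φ) u).flip b) u :=
      (ContinuousLinearMap.apply ℝ (𝔼 D) b).hasFDerivAt.comp u hφ'
    have heq : (fun x => fderiv ℝ φ x b) =ᶠ[𝓝 u] fun x => gaussMap X (φ x) (fderiv ℝ φ x b) :=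
      (h.isOpen.eventually_mem hu).mono fun x hx =>
        (gaussMap_eq_self_iff.2 (h.fderiv_apply_mem hx b)).symm
    have hprod := (((h.gaussMap_hasFDerivAt hu).clm_apply hb).congr_of_eventuallyEq heq).unique hb
    rw [eq_sub_iff_add_eq']
    simpa using! DFunLike.congr_fun hprod a
  rw [hleibniz, hleibniz, hsymm.eq w₁ w₂]

theorem fderiv_gaussMap_eq_zero (h : IsSmoothParam X φ U) (hu : u ∈ U) {w : E}
    (hw : ∀ v ∈ TangentAt X (φ u), fderiv ℝ (gaussMap X ∘ φ) u w v = 0) :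
    fderiv ℝ (gaussMap X ∘ φ) u w = 0 :=
  deriv_eq_zero_of_isStarProjection (fun _ => isStarProjection_starProjection)
    (h.gaussMap_hasFDerivAt hu) <| ContinuousLinearMap.ext fun v =>
      hw _ (Submodule.starProjection_apply_mem _ v)

theorem gaussNullity_eq_map_ker (h : IsSmoothParam X φ U) (hu : u ∈ U) :
    gaussNullity X (φ u) = (LinearMap.ker (fderiv ℝ (gaussMap X ∘ φ) u :
      E →ₗ[ℝ] 𝔼 D →L[ℝ] 𝔼 D)).map (fderiv ℝ φ u : E →ₗ[ℝ] 𝔼 D) := by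
  ext v
  rw [mem_gaussNullity, h.gaussDeriv_eq hu]
  constructor
  · rintro ⟨hv, hB⟩
    obtain ⟨w, rfl⟩ := h.tangentAt_eq hu ▸ hv
    refine ⟨w, h.fderiv_gaussMap_eq_zero hu fun v hv => ?_, rfl⟩
    obtain ⟨w', rfl⟩ := h.tangentAt_eq hu ▸ hv
    exact (h.fderiv_gaussMap_comm hu w w').trans (hB _ ⟨w', rfl⟩)
  · rintro ⟨w, hw, rfl⟩
    refine ⟨h.fderiv_apply_mem hu w, ?_⟩
    rintro _ ⟨w', rfl⟩
    exact (h.fderiv_gaussMap_comm hu w' w).trans (DFunLike.congr_fun hw _)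

theorem mem_gaussNullity_iff (h : IsSmoothParam X φ U) (hu : u ∈ U) {v : 𝔼 D} :
    v ∈ gaussNullity X (φ u) ↔
      ∃ w, fderiv ℝ φ u w = v ∧ fderiv ℝ (gaussMap X ∘ φ) u w = 0 := by
  simp only [h.gaussNullity_eq_map_ker hu, Submodule.mem_map, LinearMap.mem_ker]
  exact exists_congr fun w => and_comm

theorem finrank_gaussNullity (h : IsSmoothParam X φ U) (hu : u ∈ U) :
    Module.finrank ℝ (gaussNullity X (φ u)) =
      Module.finrank ℝ (LinearMap.ker (fderiv ℝ (gaussMap X ∘ φ) u :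
        E →ₗ[ℝ] 𝔼 D →L[ℝ] 𝔼 D)) := by
  rw [h.gaussNullity_eq_map_ker hu]
  exact (Submodule.equivMapOfInjective _ (h.injective_fderiv u hu) _).finrank_eq.symm

theorem finrank_gaussDeriv_add_finrank_gaussNullity (h : IsSmoothParam X φ U) (hu : u ∈ U) :
    Module.finrank ℝ (gaussDeriv X (φ u)) + Module.finrank ℝ (gaussNullity X (φ u)) =
      Module.finrank ℝ E := by
  rw [h.gaussDeriv_eq hu, h.finrank_gaussNullity hu]
  exact LinearMap.finrank_range_add_finrank_ker _

end IsSmoothParam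

end GaussMap

section FlatPlaques

variable {D : ℕ} {E : Type*} [NormedAddCommGroup E] [NormedSpace ℝ E]

/-- `X` is a submanifold of `ℝ^D` modelled on `E`. -/
def HasSmoothParams (E : Type*) [NormedAddCommGroup E] [NormedSpace ℝ E] (X : Set (𝔼 D)) : Prop :=
  ∀ x ∈ X, ∃ (φ : E → 𝔼 D) (U : Set E) (u : E), IsSmoothParam X φ U ∧ u ∈ U ∧ φ u = x

/-- `x` is a point of `X` of minimal index of nullity. -/
structure IsMinNullity (X : Set (𝔼 D)) (x : 𝔼 D) : Prop where
  mem : x ∈ X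
  finrank_le : ∀ y ∈ X,
    Module.finrank ℝ (gaussNullity X x) ≤ Module.finrank ℝ (gaussNullity X y)

/-- `y` is a point of `X` at which the tangent space and the second fundamental form have the same
position as at `x`: the Gauss map has the same value and the same image of its differential. -/
structure IsParallel (X : Set (𝔼 D)) (x y : 𝔼 D) : Prop where
  mem : y ∈ X
  gaussMap_eq : gaussMap X y = gaussMap X x
  gaussDeriv_eq : gaussDeriv X y = gaussDeriv X x

namespace IsParallel

variable {X : Set (𝔼 D)} {x y z : 𝔼 D}

theorem refl (hx : x ∈ X) : IsParallel X x x := ⟨hx, rfl, rfl⟩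

theorem trans (hxy : IsParallel X x y) (hyz : IsParallel X y z) : IsParallel X x z :=
  ⟨hyz.mem, hyz.gaussMap_eq.trans hxy.gaussMap_eq, hyz.gaussDeriv_eq.trans hxy.gaussDeriv_eq⟩

theorem tangentAt_eq (h : IsParallel X x y) : TangentAt X y = TangentAt X x :=
  tangentAt_eq_of_gaussMap_eq h.gaussMap_eq

theorem gaussNullity_eq (h : IsParallel X x y) : gaussNullity X y = gaussNullity X x := by
  rw [gaussNullity, gaussNullity, h.tangentAt_eq, h.gaussDeriv_eq]

theorem isMinNullity (h : IsParallel X x y) (hx : IsMinNullity X x) : IsMinNullity X y :=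
  ⟨h.mem, h.gaussNullity_eq ▸ hx.finrank_le⟩

end IsParallel

namespace IsSmoothParam

variable {X : Set (𝔼 D)} {φ : E → 𝔼 D} {U : Set E} {u : E}

theorem fderiv_clm_comp (h : IsSmoothParam X φ U) (hu : u ∈ U) {F : Type*} [NormedAddCommGroup F]
    [NormedSpace ℝ F] (L : 𝔼 D →L[ℝ] F) (w : E) : fderiv ℝ (L ∘ φ) u w = L (fderiv ℝ φ u w) :=
  DFunLike.congr_fun (L.hasFDerivAt.comp u (h.hasFDerivAt hu)).fderiv w

theorem exists_isRankChart_gaussMap [FiniteDimensional ℝ E] {Z : Type*} [NormedAddCommGroup Z]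
    [NormedSpace ℝ Z] [FiniteDimensional ℝ Z] (h : IsSmoothParam X φ U) (hu : u ∈ U)
    (hmin : IsMinNullity X (φ u)) {P : 𝔼 D →L[ℝ] Z}
    (hP : ∀ v ∈ gaussNullity X (φ u), P v = 0 → v = 0)
    (hZ : Module.finrank ℝ Z = Module.finrank ℝ (gaussNullity X (φ u))) :
    ∃ (r : ℕ) (e : OpenPartialHomeomorph E (𝔼 r × Z)),
      u ∈ e.source ∧ e.source ⊆ U ∧ IsRankChart (gaussMap X ∘ φ) (P ∘ φ) e := by
  refine exists_isRankChart h.isOpen hu (fun x => h.gaussMap_contDiffAt)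
    (fun x hx => P.contDiff.contDiffAt.comp x (h.contDiffAt x hx))
    (fun w hΓ hPw => ?_) (hZ.trans (h.finrank_gaussNullity hu)) (fun x hx => ?_)
  · rw [h.fderiv_clm_comp hu] at hPw
    exact (map_eq_zero_iff _ (h.injective_fderiv u hu)).1
      (hP _ ((h.mem_gaussNullity_iff hu).2 ⟨w, rfl, hΓ⟩) hPw)
  · exact (h.finrank_gaussNullity hu).symm.trans_le
      ((hmin.finrank_le _ (h.mem x hx)).trans_eq (h.finrank_gaussNullity hx))

end IsSmoothParam

namespace IsRankChart

variable {X : Set (𝔼 D)} {φ : E → 𝔼 D} {U : Set E}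
  {Y Z : Type*} [NormedAddCommGroup Y] [NormedSpace ℝ Y] [NormedAddCommGroup Z] [NormedSpace ℝ Z]
  {P : 𝔼 D →L[ℝ] Z} {e : OpenPartialHomeomorph E (Y × Z)} {u u' : E}

theorem fderiv_eq_prod (he : IsRankChart (gaussMap X ∘ φ) (P ∘ φ) e)
    (h : IsSmoothParam X φ U) (hU : e.source ⊆ U) (hu : u ∈ e.source) {w : E}
    (hw : fderiv ℝ (gaussMap X ∘ φ) u w = 0) : fderiv ℝ e u w = (0, P (fderiv ℝ φ u w)) := by
  refine Prod.ext ((he.fderiv_fst_eq_zero_iff u hu w).2 hw) ?_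
  have hd := ((he.contDiffAt u hu).differentiableAt (by simp)).hasFDerivAt.snd.fderiv
  simp only [he.snd_apply] at hd
  exact (DFunLike.congr_fun hd w).symm.trans (h.fderiv_clm_comp (hU hu) P w)

variable [FiniteDimensional ℝ E]

theorem isParallel_of_fst_eq (he : IsRankChart (gaussMap X ∘ φ) (P ∘ φ) e)
    (h : IsSmoothParam X φ U) (hU : e.source ⊆ U) (hu : u ∈ e.source) (hu' : u' ∈ e.source)
    (hfst : (e u).1 = (e u').1) : IsParallel X (φ u) (φ u') where
  mem := h.mem u' (hU hu')
  gaussMap_eq := he.apply_eq_of_fst_eq hu hu' hfst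
  gaussDeriv_eq := by
    rw [h.gaussDeriv_eq (hU hu), h.gaussDeriv_eq (hU hu')]
    exact (he.range_fderiv_le_of_fst_eq hu' hu hfst.symm).antisymm
      (he.range_fderiv_le_of_fst_eq hu hu' hfst)

theorem sub_mem_gaussNullity (he : IsRankChart (gaussMap X ∘ φ) (P ∘ φ) e)
    (h : IsSmoothParam X φ U) (hU : e.source ⊆ U) (hu : u ∈ e.source) (hu' : u' ∈ e.source)
    (hfst : (e u).1 = (e u').1) : φ u' - φ u ∈ gaussNullity X (φ u) := by
  refine he.sub_mem_of_fst_eq (fun x hx => (h.hasFDerivAt (hU hx)).differentiableAt)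
    (Submodule.ClosedComplemented.of_finiteDimensional _) hu hu' hfst fun x hx hxfst w hw => ?_
  rw [← (he.isParallel_of_fst_eq h hU hu hx hxfst.symm).gaussNullity_eq]
  exact (h.mem_gaussNullity_iff (hU hx)).2 ⟨w, rfl, hw⟩

theorem eq_zero_of_mem_gaussNullity (he : IsRankChart (gaussMap X ∘ φ) (P ∘ φ) e)
    (h : IsSmoothParam X φ U) (hU : e.source ⊆ U) (hu : u ∈ e.source) {v : 𝔼 D}
    (hv : v ∈ gaussNullity X (φ u)) (hPv : P v = 0) : v = 0 := by
  obtain ⟨w, rfl, hw⟩ := (h.mem_gaussNullity_iff (hU hu)).1 hv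
  have hew : fderiv ℝ e u w = 0 := by
    rw [he.fderiv_eq_prod h hU hu hw, hPv, Prod.mk_zero_zero]
  rw [(map_eq_zero_iff _ (he.isInvertible_fderiv u hu).injective).1 hew, map_zero]

theorem eventually_isParallel (he : IsRankChart (gaussMap X ∘ φ) (P ∘ φ) e)
    (h : IsSmoothParam X φ U) (hU : e.source ⊆ U) (hu : u ∈ e.source) :
    ∀ᶠ z in 𝓝 (φ u, φ u), z.1 ∈ X → z.2 - z.1 ∈ gaussNullity X z.1 →
      IsParallel X z.1 z.2 := by
  obtain ⟨ψ, hψ, hψu, hψφ⟩ := h.exists_leftInverse u (hU hu)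
  have hψ_tendsto : Tendsto (fun z : 𝔼 D × 𝔼 D => ψ z.1) (𝓝 (φ u, φ u)) (𝓝 u) :=
    (hψu ▸ hψ.continuousAt.tendsto).comp (continuous_fst.tendsto' _ _ rfl)
  let η (z : 𝔼 D × 𝔼 D) : Y × Z := e (ψ z.1) + (0, P (z.2 - z.1))
  have htranslate : Continuous fun z : 𝔼 D × 𝔼 D => ((0 : Y), P (z.2 - z.1)) := by fun_prop
  have hη : Tendsto η (𝓝 (φ u, φ u)) (𝓝 (e u)) := by
    rw [show e u = e u + (0, P (φ u - φ u)) by simp]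
    exact ((he.contDiffAt u hu).continuousAt.tendsto.comp hψ_tendsto).add
      (htranslate.tendsto (φ u, φ u))
  filter_upwards [hψ_tendsto.eventually (e.open_source.mem_nhds hu),
    hη.eventually (e.open_target.mem_nhds (e.map_source hu)),
    continuous_fst.tendsto' (φ u, φ u) _ rfl (eventually_nhdsWithin_iff.1 hψφ)]
    with ⟨x, y⟩ hsource htarget hψx hx hxy
  replace hψx : φ (ψ x) = x := hψx hx
  let u' := e.symm (η (x, y))
  have hu' : u' ∈ e.source := e.map_target htarget
  have heu' : e u' = e (ψ x) + (0, P (y - x)) := e.right_inv htarget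
  have hfst : (e (ψ x)).1 = (e u').1 := by rw [heu', Prod.fst_add, add_zero]
  have hP : P (φ u' - x - (y - x)) = 0 := by
    have hsnd := congrArg Prod.snd heu'
    rw [Prod.snd_add, he.snd_apply, he.snd_apply, Function.comp_apply, Function.comp_apply,
      hψx] at hsnd
    rw [map_sub, map_sub, hsnd, add_sub_cancel_left, sub_self]
  have hmem : φ u' - x ∈ gaussNullity X x := by
    simpa only [hψx] using he.sub_mem_gaussNullity h hU hsource hu' hfst
  have hzero := he.eq_zero_of_mem_gaussNullity h hU hsource
    (hψx.symm ▸ sub_mem hmem hxy) hP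
  rw [sub_sub_sub_cancel_right, sub_eq_zero] at hzero
  simpa only [hψx, hzero] using he.isParallel_of_fst_eq h hU hsource hu' hfst

theorem exists_section_gaussNullity (he : IsRankChart (gaussMap X ∘ φ) (P ∘ φ) e)
    (h : IsSmoothParam X φ U) (hU : e.source ⊆ U) (hu : u ∈ e.source) {v : 𝔼 D}
    (hv : v ∈ gaussNullity X (φ u)) :
    ∃ V : E → 𝔼 D, DifferentiableAt ℝ V u ∧ V u = v ∧
      ∀ᶠ x in 𝓝 u, V x ∈ gaussNullity X (φ x) := by
  have : CompleteSpace E := FiniteDimensional.complete ℝ E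
  obtain ⟨w, rfl, hw⟩ := (h.mem_gaussNullity_iff (hU hu)).1 hv
  refine ⟨fun x => fderiv ℝ φ x ((fderiv ℝ e x).inverse (0, P (fderiv ℝ φ u w))), ?_, ?_, ?_⟩
  · have hinv : ContDiffAt ℝ ∞ (fun x => (fderiv ℝ e x).inverse) u :=
      (he.isInvertible_fderiv u hu).contDiffAt_map_inverse.comp u
        ((he.contDiffAt u hu).fderiv_right (by simp))
    exact ((((h.contDiffAt u (hU hu)).fderiv_right (m := ∞) (by simp)).clm_apply
      (hinv.clm_apply contDiffAt_const)).differentiableAt (by simp))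
  · beta_reduce
    rw [← he.fderiv_eq_prod h hU hu hw, (he.isInvertible_fderiv u hu).inverse_apply_self]
  · filter_upwards [e.open_source.mem_nhds hu] with x hx
    exact (h.mem_gaussNullity_iff (hU hx)).2 ⟨_, rfl, he.fderiv_inverse_inr hx _⟩

end IsRankChart

end FlatPlaques

section Propagation

variable {D : ℕ} {E : Type*} [NormedAddCommGroup E] [NormedSpace ℝ E] [FiniteDimensional ℝ E]
  {X : Set (𝔼 D)} {q v : 𝔼 D}

theorem IsMinNullity.exists_isRankChart (hX : HasSmoothParams E X) (hq : IsMinNullity X q) :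
    ∃ (φ : E → 𝔼 D) (U : Set E) (u : E) (r : ℕ)
      (e : OpenPartialHomeomorph E (𝔼 r × gaussNullity X q)), IsSmoothParam X φ U ∧ φ u = q ∧
      u ∈ e.source ∧ e.source ⊆ U ∧
      IsRankChart (gaussMap X ∘ φ) ((gaussNullity X q).orthogonalProjectionOnto ∘ φ) e := by
  obtain ⟨φ, U, u, h, hu, rfl⟩ := hX q hq.mem
  have hP (v : 𝔼 D) (hv : v ∈ gaussNullity X (φ u))
      (hPv : (gaussNullity X (φ u)).orthogonalProjectionOnto v = 0) : v = 0 :=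
    inner_self_eq_zero.1 (Submodule.orthogonalProjectionOnto_eq_zero_iff.1 hPv v hv)
  obtain ⟨r, e, hue, heU, he⟩ := h.exists_isRankChart_gaussMap hu hq hP rfl
  exact ⟨φ, U, u, r, e, h, rfl, hue, heU, he⟩

theorem IsMinNullity.eventually_isParallel (hX : HasSmoothParams E X) (hq : IsMinNullity X q) :
    ∀ᶠ z in 𝓝 (q, q), z.1 ∈ X → z.2 - z.1 ∈ gaussNullity X z.1 → IsParallel X z.1 z.2 := by
  obtain ⟨φ, U, u, r, e, h, rfl, hue, heU, he⟩ := hq.exists_isRankChart hX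
  exact he.eventually_isParallel h heU hue

theorem IsMinNullity.exists_variation (hX : HasSmoothParams E X) (hq : IsMinNullity X q)
    (hv : v ∈ gaussNullity X q) {B : 𝔼 D →L[ℝ] 𝔼 D} (hB : B ∈ gaussDeriv X q) :
    ∃ (x V : ℝ → 𝔼 D) (x' V' : 𝔼 D), HasDerivAt x x' 0 ∧ HasDerivAt V V' 0 ∧ x 0 = q ∧ V 0 = v ∧
      HasDerivAt (gaussMap X ∘ x) B 0 ∧ ∀ᶠ s in 𝓝 0, x s ∈ X ∧ V s ∈ gaussNullity X (x s) := by
  obtain ⟨φ, U, u, r, e, h, rfl, hue, heU, he⟩ := hq.exists_isRankChart hX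
  obtain ⟨V, hV, rfl, hVmem⟩ := he.exists_section_gaussNullity h heU hue hv
  obtain ⟨w, rfl⟩ := h.gaussDeriv_eq (heU hue) ▸ hB
  obtain ⟨c, -, hcU, rfl, hcw⟩ := h.exists_curve (heU hue) w
  exact ⟨φ ∘ c, V ∘ c, _, _, (h.hasFDerivAt (heU hue)).comp_hasDerivAt 0 hcw,
    hV.hasFDerivAt.comp_hasDerivAt 0 hcw, rfl, rfl,
    (h.gaussMap_hasFDerivAt (heU hue)).comp_hasDerivAt 0 hcw,
    (hcw.continuousAt.eventually hVmem).mono fun s hs => ⟨h.mem _ (hcU s), hs⟩⟩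

theorem HasSmoothParams.exists_gaussMap_extension (hX : HasSmoothParams E X) (hq : q ∈ X) :
    ∃ Γ : 𝔼 D → 𝔼 D →L[ℝ] 𝔼 D, ContDiffAt ℝ ∞ Γ q ∧ (∀ᶠ x in 𝓝 q, x ∈ X → Γ x = gaussMap X x) ∧
      ∀ v, fderiv ℝ Γ q v ∈ gaussDeriv X q := by
  obtain ⟨φ, U, u, h, hu, rfl⟩ := hX q hq
  obtain ⟨ψ, hψ, hψu, hψφ⟩ := h.exists_leftInverse u hu
  have hΓ := h.gaussMap_contDiffAt hu
  refine ⟨(gaussMap X ∘ φ) ∘ ψ, ContDiffAt.comp _ (hψu.symm ▸ hΓ) hψ,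
    (eventually_nhdsWithin_iff.1 hψφ).mono fun x hx hxX => congrArg (gaussMap X) (hx hxX),
    fun v => ?_⟩
  rw [h.gaussDeriv_eq hu]
  have hderiv : HasFDerivAt ((gaussMap X ∘ φ) ∘ ψ)
      (fderiv ℝ (gaussMap X ∘ φ) u ∘L fderiv ℝ ψ (φ u)) (φ u) :=
    HasFDerivAt.comp _ (hψu.symm ▸ h.gaussMap_hasFDerivAt hu)
      (hψ.differentiableAt (by simp)).hasFDerivAt
  rw [hderiv.fderiv]
  exact ⟨_, rfl⟩

theorem IsMinNullity.of_gaussDeriv_le {x y : 𝔼 D} (hX : HasSmoothParams E X)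
    (hx : IsMinNullity X x) (hy : y ∈ X) (hle : gaussDeriv X x ≤ gaussDeriv X y) :
    IsMinNullity X y := by
  have hrank : ∀ z ∈ X, Module.finrank ℝ (gaussDeriv X z) + Module.finrank ℝ (gaussNullity X z) =
      Module.finrank ℝ E := fun z hz => by
    obtain ⟨φ, U, u, h, hu, rfl⟩ := hX z hz
    exact h.finrank_gaussDeriv_add_finrank_gaussNullity hu
  refine ⟨hy, fun z hz => le_trans ?_ (hx.finrank_le z hz)⟩
  have := Submodule.finrank_mono hle
  have := hrank x hx.mem
  have := hrank y hy
  omega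

variable {ι T : Type*} [TopologicalSpace T] {l : Filter ι} {x : ι → 𝔼 D} {F : ι → T → 𝔼 D}
  {c : T → 𝔼 D}

theorem IsMinNullity.eventually_isParallel_family (hX : HasSmoothParams E X) (hc : Continuous c)
    (hF : ∀ t, Tendsto (F · t) l (𝓝 (c t)))
    (hFx : ∀ᶠ s in l, ∀ t t', F s t' - F s t ∈ gaussNullity X (x s)) {t : T}
    (ht : IsMinNullity X (c t)) :
    ∀ᶠ p in 𝓝 (t, t), (∀ᶠ s in l, IsParallel X (x s) (F s p.1)) →
      ∀ᶠ s in l, IsParallel X (x s) (F s p.2) := by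
  have hcc : Tendsto (fun p : T × T => (c p.1, c p.2)) (𝓝 (t, t)) (𝓝 (c t, c t)) :=
    (hc.prodMap hc).continuousAt
  filter_upwards [hcc.eventually (eventually_eventually_nhds.2 (ht.eventually_isParallel hX))]
    with p hp hp₁
  filter_upwards [((hF p.1).prodMk_nhds (hF p.2)).eventually hp, hp₁, hFx] with s hs hs₁ hsx
  exact hs₁.trans (hs hs₁.mem (hs₁.gaussNullity_eq ▸ hsx p.1 p.2))

theorem eventually_isParallel_family_of_isPreconnected (hX : HasSmoothParams E X)
    (hc : Continuous c) (hF : ∀ t, Tendsto (F · t) l (𝓝 (c t)))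
    (hFx : ∀ᶠ s in l, ∀ t t', F s t' - F s t ∈ gaussNullity X (x s)) {C : Set T}
    (hC : IsPreconnected C) (hmin : ∀ t ∈ C, IsMinNullity X (c t)) {t t' : T} (ht : t ∈ C)
    (ht' : t' ∈ C) (hpar : ∀ᶠ s in l, IsParallel X (x s) (F s t)) :
    ∀ᶠ s in l, IsParallel X (x s) (F s t') := by
  refine (hC.induction₂ (fun t t' => (∀ᶠ s in l, IsParallel X (x s) (F s t)) ↔
    ∀ᶠ s in l, IsParallel X (x s) (F s t')) (fun t ht => ?_) (fun _ _ _ _ _ _ => Iff.trans)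
    (fun _ _ _ _ => Iff.symm) ht ht').1 hpar
  have hloc := (hmin t ht).eventually_isParallel_family hX hc hF hFx
  have hright := (Continuous.prodMk_right t).continuousAt.eventually hloc
  have hleft := (Continuous.prodMk_left t).continuousAt.eventually hloc
  filter_upwards [nhdsWithin_le_nhds hright, nhdsWithin_le_nhds hleft] with t' h h'
  exact ⟨h, h'⟩

theorem IsMinNullity.eventually_isParallel_curve (hX : HasSmoothParams E X) (hc : Continuous c)
    (hcq : ∀ t t', c t' - c t ∈ gaussNullity X q) {t : T} (ht : IsMinNullity X (c t)) :
    ∀ᶠ p in 𝓝 (t, t), IsParallel X q (c p.1) → IsParallel X q (c p.2) := by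
  simpa using ht.eventually_isParallel_family (l := pure ()) (x := fun _ => q)
    (F := fun _ => c) hX hc (fun t => tendsto_pure_nhds (fun _ => c t) ()) (by simpa using hcq)

variable {a b : ℝ → ℝ}

theorem IsMinNullity.eventually_isParallel_variation (hX : HasSmoothParams E X)
    (hq : IsMinNullity X q) (ha : Continuous a) (hb : Continuous b) (ha0 : a 0 = 1)
    (hb0 : b 0 = 0) (hab : ∀ x ∈ X, ∀ t t', (a t' - a t) • x ∈ gaussNullity X x) {C : Set ℝ}
    (hC : IsPreconnected C) (h0 : 0 ∈ C) (hpar : ∀ t ∈ C, IsParallel X q (a t • q + b t • v))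
    {x V : ι → 𝔼 D} (hx : Tendsto x l (𝓝 q)) (hV : Tendsto V l (𝓝 v))
    (hxV : ∀ᶠ s in l, x s ∈ X ∧ V s ∈ gaussNullity X (x s)) {t : ℝ} (ht : t ∈ C) :
    ∀ᶠ s in l, IsParallel X (x s) (a t • x s + b t • V s) := by
  refine eventually_isParallel_family_of_isPreconnected (F := fun s t => a t • x s + b t • V s)
    hX (by fun_prop : Continuous fun t => a t • q + b t • v)
    (fun t => (hx.const_smul (a t)).add (hV.const_smul (b t))) ?_ hC
    (fun t ht => (hpar t ht).isMinNullity hq) h0 ht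
    (hxV.mono fun s hs => by simpa [ha0, hb0] using IsParallel.refl hs.1)
  filter_upwards [hxV] with s hs t t'
  rw [show a t' • x s + b t' • V s - (a t • x s + b t • V s) =
    (a t' - a t) • x s + (b t' - b t) • V s by simp only [sub_smul]; abel]
  exact add_mem (hab _ hs.1 t t') (Submodule.smul_mem _ _ hs.2)

/-- Along a variation of the curve `a • q + b • v` by curves in nearby leaves the Gauss map does not
depend on `t`, hence neither does its derivative in the direction of the variation. -/
theorem IsMinNullity.gaussDeriv_le_of_mem_closure (hX : HasSmoothParams E X)
    (hq : IsMinNullity X q) (hv : v ∈ gaussNullity X q) (ha : Continuous a) (hb : Continuous b)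
    (ha0 : a 0 = 1) (hb0 : b 0 = 0) (hab : ∀ x ∈ X, ∀ t t', (a t' - a t) • x ∈ gaussNullity X x)
    {C : Set ℝ} (hC : IsPreconnected C) (h0 : 0 ∈ C)
    (hpar : ∀ t ∈ C, IsParallel X q (a t • q + b t • v)) {t₁ : ℝ} (ht₁ : t₁ ∈ closure C)
    (hmem : a t₁ • q + b t₁ • v ∈ X) :
    gaussDeriv X q ≤ gaussDeriv X (a t₁ • q + b t₁ • v) := by
  intro B hB
  obtain ⟨x, V, x', V', hx, hV, rfl, rfl, hΓx, hxV⟩ := hq.exists_variation hX hv hB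
  obtain ⟨Γ, hΓ, hΓX, hΓmem⟩ := hX.exists_gaussMap_extension hmem
  set c : ℝ → 𝔼 D := fun t => a t • x 0 + b t • V 0
  have hc : ContinuousAt c t₁ := by fun_prop
  have hF (t : ℝ) : HasDerivAt (fun s => a t • x s + b t • V s) (a t • x' + b t • V') 0 :=
    (hx.const_smul (a t)).add (hV.const_smul (b t))
  have hΓdiff : ∀ᶠ y in 𝓝 (c t₁), DifferentiableAt ℝ Γ y :=
    ((hΓ.of_le (by simp : (1 : WithTop ℕ∞) ≤ ∞)).eventually (by simp)).mono fun y hy =>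
      hy.differentiableAt (by simp)
  have hconst : ∀ᶠ t in 𝓝[C] t₁, fderiv ℝ Γ (c t) (a t • x' + b t • V') = B := by
    filter_upwards [nhdsWithin_le_nhds (hc.eventually hΓdiff),
      nhdsWithin_le_nhds (hc.eventually (eventually_eventually_nhds.2 hΓX)),
      self_mem_nhdsWithin] with t hΓdiff_t hΓX_t ht
    refine (hΓdiff_t.hasFDerivAt.comp_hasDerivAt_of_eq 0 (hF t) rfl).unique
      (hΓx.congr_of_eventuallyEq ?_)
    filter_upwards [hq.eventually_isParallel_variation hX ha hb ha0 hb0 hab hC h0 hpar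
      hx.continuousAt hV.continuousAt hxV ht, (hF t).continuousAt.eventually hΓX_t] with s hs hΓs
    exact (hΓs hs.mem).trans hs.gaussMap_eq
  have hcont : ContinuousAt (fun t => fderiv ℝ Γ (c t) (a t • x' + b t • V')) t₁ :=
    (ContinuousAt.comp (f := c) (hΓ.fderiv_right (m := 0) (by simp)).continuousAt hc).clm_apply
      (by fun_prop : Continuous fun t => a t • x' + b t • V').continuousAt
  have : (𝓝[C] t₁).NeBot := mem_closure_iff_nhdsWithin_neBot.1 ht₁
  exact tendsto_nhds_unique (hcont.tendsto.mono_left nhdsWithin_le_nhds)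
    (tendsto_const_nhds.congr' (hconst.mono fun t ht => ht.symm)) ▸ hΓmem _

end Propagation

theorem exists_contDiffAt_leftInverse {E F : Type*} [NormedAddCommGroup E] [NormedSpace ℝ E]
    [FiniteDimensional ℝ E] [NormedAddCommGroup F] [NormedSpace ℝ F] [FiniteDimensional ℝ F]
    {φ : E → F} {U : Set E} {u : E} (hU : IsOpen U) (hu : u ∈ U)
    (hφ : ∀ x ∈ U, ContDiffAt ℝ ∞ φ x) (hinj : Function.Injective (fderiv ℝ φ u)) :
    ∃ ψ : F → E, ContDiffAt ℝ ∞ ψ (φ u) ∧ ψ (φ u) = u ∧ ∀ᶠ x in 𝓝 u, ψ (φ x) = x := by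
  obtain ⟨L, hL⟩ := LinearMap.exists_leftInverse_of_injective (fderiv ℝ φ u : E →ₗ[ℝ] F)
    (LinearMap.ker_eq_bot.2 hinj)
  let L' : F →L[ℝ] E := LinearMap.toContinuousLinearMap L
  have hderiv : fderiv ℝ (L' ∘ φ) u = .id ℝ E := by
    rw [(L'.hasFDerivAt.comp u ((hφ u hu).differentiableAt (by simp)).hasFDerivAt).fderiv]
    exact ContinuousLinearMap.coe_injective hL
  obtain ⟨e, hue, -, he, hes⟩ := exists_openPartialHomeomorph_contDiffAt_symm hU hu
    (fun x hx => L'.contDiff.contDiffAt.comp x (hφ x hx)) (hderiv ▸ ⟨.refl ℝ E, rfl⟩)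
  have hleft : ∀ x ∈ e.source, e.symm (L' (φ x)) = x := fun x hx => by
    simpa only [he, Function.comp_apply] using e.left_inv hx
  exact ⟨e.symm ∘ L', (hes u hue).2.comp (φ u) L'.contDiff.contDiffAt, hleft u hue,
    eventually_of_mem (e.open_source.mem_nhds hue) hleft⟩

section Submanifold

variable {D n : ℕ} {S : Set (𝔼 D)}

theorem IsLocalParam.isSmoothParam {φ : 𝔼 n → 𝔼 D} {U : Set (𝔼 n)} {p : 𝔼 D}
    (h : IsLocalParam S n φ U p) : IsSmoothParam S φ U := by
  have hφ (u : 𝔼 n) (hu : u ∈ U) : ContDiffAt ℝ ∞ φ u := h.smooth.contDiffAt (h.isOpen.mem_nhds hu)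
  have hinj (u : 𝔼 n) (hu : u ∈ U) : Function.Injective (fderiv ℝ φ u) := by
    simpa only [fderivWithin_of_isOpen h.isOpen hu] using h.immersion u hu
  obtain ⟨V, hV, hUV⟩ := h.openImage
  have hmem (u : 𝔼 n) (hu : u ∈ U) : φ u ∈ S ∩ V := hUV ▸ mem_image_of_mem φ hu
  refine ⟨h.isOpen, hφ, fun u hu => (hmem u hu).1, hinj, fun u hu => ?_⟩
  obtain ⟨ψ, hψ, hψu, hψφ⟩ := exists_contDiffAt_leftInverse h.isOpen hu hφ (hinj u hu)
  refine ⟨ψ, hψ, hψu, ?_⟩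
  obtain ⟨χ, hχ, hχφ⟩ := h.embedding
  have hχu : Tendsto χ (𝓝[φ '' U] φ u) (𝓝 u) := by
    simpa only [ContinuousWithinAt, hχφ u hu] using hχ (φ u) (mem_image_of_mem φ hu)
  rw [← nhdsWithin_inter_of_mem' (mem_nhdsWithin_of_mem_nhds (hV.mem_nhds (hmem u hu).2)), ← hUV]
  filter_upwards [hχu.eventually hψφ, self_mem_nhdsWithin] with x hx hxU
  obtain ⟨u', hu', rfl⟩ := hxU
  rw [hχφ u' hu'] at hx
  exact congrArg φ hx

theorem IsSubmanifold.hasSmoothParams (h : IsSubmanifold S n) : HasSmoothParams (𝔼 n) S := by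
  intro x hx
  obtain ⟨φ, U, hφ⟩ := h x hx
  obtain ⟨u, hu, hux⟩ := hφ.mem
  exact ⟨φ, U, u, hφ.isSmoothParam, hu, hux⟩

end Submanifold

section AmbientForm

variable {k : SpaceFormKind} {D : ℕ} {p v : 𝔼 D} {S : Set (𝔼 D)}

/-- The sectional curvature of the space form of kind `k`. -/
def SpaceFormKind.curvature (k : SpaceFormKind) : ℝ :=
  match k with
  | .euclidean => 0
  | .sphere => 1
  | .hyperbolic => -1

theorem SpaceFormKind.curvature_pow_three (k : SpaceFormKind) : k.curvature ^ 3 = k.curvature := by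
  cases k <;> norm_num [curvature]

theorem SpaceFormKind.curvature_sq (hk : k ≠ .euclidean) : k.curvature ^ 2 = 1 := by
  cases k <;> simp_all [curvature]

/-- The form `aForm` as a continuous bilinear form. -/
def ambientForm (k : SpaceFormKind) (D : ℕ) : 𝔼 D →L[ℝ] 𝔼 D →L[ℝ] ℝ :=
  ∑ i, (formSign k D i • EuclideanSpace.proj i : 𝔼 D →L[ℝ] ℝ).smulRight (EuclideanSpace.proj i)

theorem ambientForm_apply (x y : 𝔼 D) : ambientForm k D x y = aForm k x y := by
  simp [ambientForm, aForm]

theorem ambientForm_comm (x y : 𝔼 D) : ambientForm k D x y = ambientForm k D y x := by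
  simp only [ambientForm_apply, aForm, mul_right_comm]

theorem ambientForm_of_ne_hyperbolic (hk : k ≠ .hyperbolic) (x y : 𝔼 D) :
    ambientForm k D x y = inner ℝ x y := by
  cases k <;> simp_all [ambientForm_apply, aForm, formSign, PiLp.inner_apply, mul_comm]

theorem ambientForm_hyperbolic {d : ℕ} (x y : EuclideanSpace ℝ (Fin (d + 1))) :
    ambientForm .hyperbolic (d + 1) x y = inner ℝ x y - 2 * (x (Fin.last d) * y (Fin.last d)) := by
  have hsign (i : Fin d) : formSign .hyperbolic (d + 1) i.castSucc = 1 :=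
    if_neg (by simp [i.isLt.ne])
  have hlast : formSign .hyperbolic (d + 1) (Fin.last d) = -1 := if_pos (by simp)
  simp only [ambientForm_apply, aForm, PiLp.inner_apply, Fin.sum_univ_castSucc, hsign, hlast,
    one_mul, RCLike.inner_apply, conj_trivial, mul_comm (y _)]
  ring

theorem curvature_mul_ambientForm_self (hp : p ∈ spaceForm k D) :
    k.curvature * ambientForm k D p p = k.curvature ^ 2 := by
  rw [ambientForm_apply]
  cases k
  · simp [SpaceFormKind.curvature]
  · simp [SpaceFormKind.curvature, show aForm .sphere p p = 1 from hp]
  · simp [SpaceFormKind.curvature, hp.1]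

theorem eq_zero_of_ambientForm_self_eq_zero (hp : p ∈ spaceForm k D)
    (hpv : k.curvature * ambientForm k D p v = 0) (hv : ambientForm k D v v = 0) : v = 0 := by
  rcases eq_or_ne k .hyperbolic with rfl | hk
  · have hpp : ambientForm .hyperbolic D p p = -1 := (ambientForm_apply p p).trans hp.1
    replace hpv : ambientForm .hyperbolic D p v = 0 := by simpa [SpaceFormKind.curvature] using hpv
    obtain _ | d := D
    · exact Subsingleton.elim _ _
    rw [ambientForm_hyperbolic] at hpp hpv hv
    have hcs := real_inner_mul_inner_self_le p v
    rw [sub_eq_zero.1 hpv, sub_eq_zero.1 hv, sub_eq_iff_eq_add.1 hpp] at hcs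
    have hlast : v (Fin.last d) = 0 := by nlinarith
    exact inner_self_eq_zero.1 ((sub_eq_zero.1 hv).trans (by simp [hlast]))
  · exact inner_self_eq_zero.1 (ambientForm_of_ne_hyperbolic hk v v ▸ hv)

theorem curvature_mul_ambientForm_of_mem_tangentAt (hS : S ⊆ spaceForm k D)
    (hv : v ∈ TangentAt S p) : k.curvature * ambientForm k D p v = 0 := by
  suffices TangentAt S p ≤ LinearMap.ker (k.curvature • ambientForm k D p : 𝔼 D →ₗ[ℝ] ℝ) from
    this hv
  refine Submodule.span_le.2 ?_
  rintro _ ⟨c, hc, hcS, rfl, rfl⟩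
  have hd := (hc.differentiable (by simp) 0).hasDerivAt
  have hform := ((ambientForm k D).hasFDerivAt.comp_hasDerivAt 0 hd).clm_apply hd
    |>.const_mul k.curvature
  have hconst := hform.unique ((hasDerivAt_const 0 (k.curvature ^ 2)).congr_of_eventuallyEq
    (.of_forall fun t => curvature_mul_ambientForm_self (hS (hcS t))))
  rw [ambientForm_comm (deriv c 0)] at hconst
  change k.curvature * ambientForm k D (c 0) (deriv c 0) = 0
  change k.curvature * (ambientForm k D (c 0) (deriv c 0) +
    ambientForm k D (c 0) (deriv c 0)) = 0 at hconst
  linarith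

theorem eq_zero_of_mem_tangentAt_of_ambientForm_eq_zero (hS : S ⊆ spaceForm k D) (hp : p ∈ S)
    (hv : v ∈ TangentAt S p) (h : ∀ w ∈ TangentAt S p, ambientForm k D v w = 0) : v = 0 :=
  eq_zero_of_ambientForm_self_eq_zero (hS hp) (curvature_mul_ambientForm_of_mem_tangentAt hS hv)
    (h v hv)

theorem radialAt_eq_span (k : SpaceFormKind) (p : 𝔼 D) :
    radialAt k p = Submodule.span ℝ {k.curvature • p} := by
  cases k <;> simp [radialAt, SpaceFormKind.curvature, ← Submodule.span_neg {p}]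

theorem finrank_radialAt (hp : p ∈ spaceForm k D) :
    (Module.finrank ℝ (radialAt k p) : ℝ) = k.curvature ^ 2 := by
  rw [radialAt_eq_span]
  rcases eq_or_ne k.curvature 0 with hk | hk
  · simp [hk]
  · have hne : k.curvature • p ≠ 0 := smul_ne_zero hk fun hp0 => pow_ne_zero 2 hk <| by
      rw [← curvature_mul_ambientForm_self hp, hp0, map_zero, mul_zero]
    have hsq : k.curvature ^ 2 = 1 :=
      mul_right_cancel₀ hk (by linear_combination k.curvature_pow_three)
    rw [finrank_span_singleton hne, hsq, Nat.cast_one]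

theorem disjoint_tangentAt_radialAt (hS : S ⊆ spaceForm k D) (hp : p ∈ S) :
    Disjoint (TangentAt S p) (radialAt k p) := by
  rw [Submodule.disjoint_def, radialAt_eq_span]
  intro x hx hxp
  obtain ⟨r, rfl⟩ := Submodule.mem_span_singleton.1 hxp
  have hperp := curvature_mul_ambientForm_of_mem_tangentAt hS hx
  rw [map_smul, map_smul, smul_eq_mul, smul_eq_mul] at hperp
  have hr : r * k.curvature = 0 := by
    linear_combination hperp - r * k.curvature_pow_three -
      r * k.curvature * curvature_mul_ambientForm_self (hS hp)
  rw [smul_smul, hr, zero_smul]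

end AmbientForm

section Cone

variable {D : ℕ}

section Scaling

variable {X : Set (𝔼 D)} {x : 𝔼 D} {ρ : ℝ}

theorem tangentAt_smul (hX : ∀ ρ : ℝ, 0 < ρ → ∀ x ∈ X, ρ • x ∈ X) (hρ : 0 < ρ) :
    TangentAt X (ρ • x) = TangentAt X x := by
  have hle {y : 𝔼 D} {r : ℝ} (hr : 0 < r) : TangentAt X y ≤ TangentAt X (r • y) := by
    refine Submodule.span_le.2 ?_
    rintro _ ⟨c, hc, hcX, rfl, rfl⟩
    refine (Submodule.smul_mem_iff _ hr.ne').1 ?_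
    rw [← deriv_const_smul r (hc.differentiable (by simp) 0)]
    exact Submodule.subset_span ⟨_, hc.const_smul r, fun t => hX r hr _ (hcX t), rfl, rfl⟩
  refine le_antisymm ?_ (hle hρ)
  simpa [smul_smul, hρ.ne'] using hle (y := ρ • x) (inv_pos.2 hρ)

theorem gaussMap_smul (hX : ∀ ρ : ℝ, 0 < ρ → ∀ x ∈ X, ρ • x ∈ X) (hρ : 0 < ρ) :
    gaussMap X (ρ • x) = gaussMap X x :=
  congrArg (fun T : Submodule ℝ (𝔼 D) => T.starProjection) (tangentAt_smul hX hρ)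

theorem gaussDeriv_smul (hX : ∀ ρ : ℝ, 0 < ρ → ∀ x ∈ X, ρ • x ∈ X) (hρ : 0 < ρ) :
    gaussDeriv X (ρ • x) = gaussDeriv X x := by
  have hle {y : 𝔼 D} {r : ℝ} (hr : 0 < r) : gaussDeriv X y ≤ gaussDeriv X (r • y) := by
    refine Submodule.span_le.2 ?_
    rintro _ ⟨c, hc, hcX, rfl, rfl⟩
    refine Submodule.subset_span ⟨fun t => r • c t, hc.const_smul r, fun t => hX r hr _ (hcX t),
      rfl, ?_⟩
    exact congrArg (deriv · 0) (funext fun t => gaussMap_smul hX hr)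
  refine le_antisymm ?_ (hle hρ)
  simpa [smul_smul, hρ.ne'] using hle (y := ρ • x) (inv_pos.2 hρ)

theorem gaussNullity_smul (hX : ∀ ρ : ℝ, 0 < ρ → ∀ x ∈ X, ρ • x ∈ X) (hρ : 0 < ρ) :
    gaussNullity X (ρ • x) = gaussNullity X x := by
  rw [gaussNullity, gaussNullity, tangentAt_smul hX hρ, gaussDeriv_smul hX hρ]

theorem HasSmoothParams.self_mem_gaussNullity {E : Type*} [NormedAddCommGroup E] [NormedSpace ℝ E]
    [FiniteDimensional ℝ E] (h : HasSmoothParams E X)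
    (hX : ∀ ρ : ℝ, 0 < ρ → ∀ x ∈ X, ρ • x ∈ X) (hx : x ∈ X) : x ∈ gaussNullity X x := by
  obtain ⟨φ, U, u, hφ, hu, rfl⟩ := h x hx
  have hpos : ∀ᶠ s : ℝ in 𝓝 1, 0 < s := lt_mem_nhds one_pos
  obtain ⟨w, hw, hΓ⟩ := hφ.exists_hasDerivAt_gaussMap hu (t := (1 : ℝ))
    ((hasDerivAt_id 1).smul_const (φ u)) (hpos.mono fun s hs => hX s hs _ hx) (one_smul ℝ _)
  refine (hφ.mem_gaussNullity_iff hu).2 ⟨w, by simpa using hw, hΓ.unique ?_⟩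
  exact (hasDerivAt_const 1 (gaussMap X (φ u))).congr_of_eventuallyEq
    (hpos.mono fun s hs => gaussMap_smul hX hs)

end Scaling

/-- The cone over `S` with its vertex removed. -/
def positiveCone (S : Set (𝔼 D)) : Set (𝔼 D) := {x | ∃ ρ : ℝ, 0 < ρ ∧ ∃ y ∈ S, ρ • y = x}

theorem subset_positiveCone (S : Set (𝔼 D)) : S ⊆ positiveCone S :=
  fun x hx => ⟨1, one_pos, x, hx, one_smul ℝ x⟩

theorem smul_mem_positiveCone {S : Set (𝔼 D)} (ρ : ℝ) (hρ : 0 < ρ) (x : 𝔼 D)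
    (hx : x ∈ positiveCone S) : ρ • x ∈ positiveCone S := by
  obtain ⟨r, hr, y, hy, rfl⟩ := hx
  exact ⟨ρ * r, mul_pos hρ hr, y, hy, mul_smul ρ r y⟩

/-- `m` is a smooth radial coordinate on the cone over `S`, equal to `1` on `S`. -/
structure IsRadius (m : 𝔼 D → ℝ) (S : Set (𝔼 D)) : Prop where
  apply_smul : ∀ ρ : ℝ, 0 < ρ → ∀ y ∈ S, m (ρ • y) = ρ
  contDiffAt : ∀ x ∈ positiveCone S, ContDiffAt ℝ ∞ m x

variable {E : Type*} [NormedAddCommGroup E] [NormedSpace ℝ E] {S : Set (𝔼 D)} {φ : E → 𝔼 D}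
  {U : Set E} {m : 𝔼 D → ℝ} {u : E} {ρ : ℝ}

theorem IsSmoothParam.hasFDerivAt_smul (h : IsSmoothParam S φ U) (hu : u ∈ U) (ρ : ℝ) :
    HasFDerivAt (fun z : E × ℝ => z.2 • φ z.1)
      ((ρ • fderiv ℝ φ u).coprod (.toSpanSingleton ℝ (φ u))) (u, ρ) := by
  refine ((hasFDerivAt_snd (𝕜 := ℝ) (p := (u, ρ))).smul
    (HasFDerivAt.comp (g := φ) (u, ρ) (h.hasFDerivAt hu) hasFDerivAt_fst)).congr_fderiv ?_
  ext z <;> simp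

theorem IsRadius.injective_fderiv_smul (hm : IsRadius m S) (h : IsSmoothParam S φ U) (hu : u ∈ U)
    (hρ : 0 < ρ) : Function.Injective
      ((ρ • fderiv ℝ φ u).coprod (.toSpanSingleton ℝ (φ u)) : E × ℝ →L[ℝ] 𝔼 D) := by
  have hmem : ρ • φ u ∈ positiveCone S := ⟨ρ, hρ, φ u, h.mem u hu, rfl⟩
  have hcomp := (((hm.contDiffAt _ hmem).differentiableAt (by simp)).hasFDerivAt.comp
    (u, ρ) (h.hasFDerivAt_smul hu ρ)).congr_of_eventuallyEq
      (eventually_of_mem ((h.isOpen.prod isOpen_Ioi).mem_nhds ⟨hu, hρ⟩)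
        fun z hz => (hm.apply_smul z.2 hz.2 _ (h.mem _ hz.1)).symm)
  refine (injective_iff_map_eq_zero _).2 fun ⟨w, r⟩ hwr => ?_
  have hr : r = 0 := by
    have := DFunLike.congr_fun (hasFDerivAt_snd.unique hcomp) (w, r)
    rwa [ContinuousLinearMap.comp_apply, hwr, map_zero] at this
  subst hr
  have hw : fderiv ℝ φ u w = 0 := by simpa [hρ.ne'] using hwr
  exact Prod.ext (h.injective_fderiv u hu (hw.trans (map_zero _).symm)) rfl

theorem IsRadius.exists_leftInverse_smul (hm : IsRadius m S) (h : IsSmoothParam S φ U)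
    (hu : u ∈ U) (hρ : 0 < ρ) :
    ∃ ψ : 𝔼 D → E × ℝ, ContDiffAt ℝ ∞ ψ (ρ • φ u) ∧ ψ (ρ • φ u) = (u, ρ) ∧
      ∀ᶠ x in 𝓝[positiveCone S] (ρ • φ u), (ψ x).2 • φ (ψ x).1 = x := by
  obtain ⟨ψ, hψ, hψu, hψφ⟩ := h.exists_leftInverse u hu
  have hmem : ρ • φ u ∈ positiveCone S := ⟨ρ, hρ, φ u, h.mem u hu, rfl⟩
  have hnormalize {r : ℝ} (hr : 0 < r) {y : 𝔼 D} (hy : y ∈ S) : (m (r • y))⁻¹ • (r • y) = y := by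
    rw [hm.apply_smul r hr y hy, inv_smul_smul₀ hr.ne']
  have hsmooth : ContDiffAt ℝ ∞ (fun x => (m x)⁻¹ • x) (ρ • φ u) :=
    ((hm.contDiffAt _ hmem).inv (by rw [hm.apply_smul ρ hρ _ (h.mem u hu)]; exact hρ.ne')).smul
      contDiffAt_id
  have htendsto : Tendsto (fun x => (m x)⁻¹ • x) (𝓝[positiveCone S] (ρ • φ u)) (𝓝[S] φ u) := by
    refine tendsto_nhdsWithin_iff.2 ⟨?_, eventually_of_mem self_mem_nhdsWithin ?_⟩
    · simpa only [ContinuousAt, hnormalize hρ (h.mem u hu)] using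
        hsmooth.continuousAt.mono_left nhdsWithin_le_nhds
    · rintro _ ⟨r, hr, y, hy, rfl⟩
      rwa [hnormalize hr hy]
  refine ⟨fun x => (ψ ((m x)⁻¹ • x), m x), ?_, ?_, ?_⟩
  · refine ContDiffAt.prodMk (ContDiffAt.comp _ ?_ hsmooth) (hm.contDiffAt _ hmem)
    rwa [hnormalize hρ (h.mem u hu)]
  · simp only [hm.apply_smul ρ hρ _ (h.mem u hu), inv_smul_smul₀ hρ.ne', hψu]
  · filter_upwards [htendsto.eventually hψφ, self_mem_nhdsWithin] with x hx hxS
    obtain ⟨r, hr, y, hy, rfl⟩ := hxS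
    rw [hnormalize hr hy] at hx
    simp only [hm.apply_smul r hr y hy, inv_smul_smul₀ hr.ne', hx]

theorem IsRadius.isSmoothParam_smul (hm : IsRadius m S) (h : IsSmoothParam S φ U) :
    IsSmoothParam (positiveCone S) (fun z : E × ℝ => z.2 • φ z.1) (U ×ˢ Ioi 0) where
  isOpen := h.isOpen.prod isOpen_Ioi
  contDiffAt z hz := contDiffAt_snd.smul
    (ContDiffAt.comp (g := φ) z (h.contDiffAt z.1 hz.1) contDiffAt_fst)
  mem z hz := ⟨z.2, hz.2, φ z.1, h.mem z.1 hz.1, rfl⟩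
  injective_fderiv z hz := by
    rw [(h.hasFDerivAt_smul hz.1 z.2).fderiv]
    exact hm.injective_fderiv_smul h hz.1 hz.2
  exists_leftInverse z hz := hm.exists_leftInverse_smul h hz.1 hz.2

theorem IsRadius.hasSmoothParams (hm : IsRadius m S) (h : HasSmoothParams E S) :
    HasSmoothParams (E × ℝ) (positiveCone S) := by
  rintro _ ⟨ρ, hρ, y, hy, rfl⟩
  obtain ⟨φ, U, u, hφ, hu, rfl⟩ := h y hy
  exact ⟨_, _, (u, ρ), hm.isSmoothParam_smul hφ, ⟨hu, hρ⟩, rfl⟩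

theorem IsRadius.tangentAt_positiveCone [FiniteDimensional ℝ E] (hm : IsRadius m S)
    (h : HasSmoothParams E S) {p : 𝔼 D} (hp : p ∈ S) :
    TangentAt (positiveCone S) p = TangentAt S p ⊔ Submodule.span ℝ {p} := by
  obtain ⟨φ, U, u, hφ, hu, rfl⟩ := h p hp
  have hcone := (hm.isSmoothParam_smul hφ).tangentAt_eq (u := (u, 1)) ⟨hu, mem_Ioi.2 one_pos⟩
  rw [(hφ.hasFDerivAt_smul hu 1).fderiv, one_smul, one_smul] at hcone
  rw [hcone, hφ.tangentAt_eq hu]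
  exact (LinearMap.range_coprod _ _).trans
    (congrArg _ (LinearMap.range_toSpanSingleton (φ u)))

end Cone

section FlatModel

variable {k : SpaceFormKind} {D : ℕ} {E F : Type*} [NormedAddCommGroup E] [NormedSpace ℝ E]
  [NormedAddCommGroup F] [NormedSpace ℝ F] {S X : Set (𝔼 D)}

theorem IsSmoothParam.exists_fderiv_gaussMap_add_eq [FiniteDimensional ℝ E] {φ : E → 𝔼 D}
    {U : Set E} {u : E} (h : IsSmoothParam X φ U) (hu : u ∈ U) {c W : ℝ → 𝔼 D}
    (hc : ContDiff ℝ ∞ c) (hcX : ∀ t, c t ∈ X) (hcu : c 0 = φ u) (hW : ContDiff ℝ ∞ W)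
    (hWX : ∀ t, W t ∈ TangentAt X (c t)) :
    ∃ w, fderiv ℝ φ u w = deriv c 0 ∧
      fderiv ℝ (gaussMap X ∘ φ) u w (W 0) + gaussMap X (φ u) (deriv W 0) = deriv W 0 := by
  obtain ⟨w, hw, hΓ⟩ := h.exists_hasDerivAt_gaussMap hu (hc.differentiable (by simp) 0).hasDerivAt
    (.of_forall hcX) hcu
  have hW' := (hW.differentiable (by simp) 0).hasDerivAt
  refine ⟨w, hw, hcu ▸ (hΓ.clm_apply hW').unique (hW'.congr_of_eventuallyEq ?_)⟩
  exact .of_forall fun t => gaussMap_eq_self_iff.2 (hWX t)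

theorem IsSmoothParam.exists_tangent_field {φ : E → 𝔼 D} {U : Set E} {u : E}
    (h : IsSmoothParam S φ U) (hu : u ∈ U) {v y : 𝔼 D} (hv : v ∈ TangentAt S (φ u))
    (hy : y ∈ TangentAt S (φ u)) :
    ∃ c W : ℝ → 𝔼 D, ContDiff ℝ ∞ c ∧ (∀ t, c t ∈ S) ∧ c 0 = φ u ∧ deriv c 0 = v ∧
      ContDiff ℝ ∞ W ∧ (∀ t, W t ∈ TangentAt S (c t)) ∧ W 0 = y := by
  rw [h.tangentAt_eq hu] at hv hy
  obtain ⟨⟨w, rfl⟩, ⟨w', rfl⟩⟩ := And.intro hv hy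
  obtain ⟨c, hc, hcU, rfl, hcw⟩ := exists_contDiff_curve (h.isOpen.mem_nhds hu) w
  refine ⟨φ ∘ c, fun t => fderiv ℝ φ (c t) w', contDiff_iff_contDiffAt.2 fun t =>
    (h.contDiffAt _ (hcU t)).comp t hc.contDiffAt, fun t => h.mem _ (hcU t), rfl,
    ((h.hasFDerivAt hu).comp_hasDerivAt 0 hcw).deriv, contDiff_iff_contDiffAt.2 fun t => ?_,
    fun t => h.fderiv_apply_mem (hcU t) w', rfl⟩
  exact (ContDiffAt.comp t ((h.contDiffAt _ (hcU t)).fderiv_right (by simp))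
    hc.contDiffAt).clm_apply contDiffAt_const

/-- `X` replaces the submanifold `S` of a space form by a submanifold of the ambient linear space
which has the same second fundamental form: `S` itself in the euclidean case, the cone over `S` in
the other two cases. -/
structure IsFlatModel (k : SpaceFormKind) (E : Type*) [NormedAddCommGroup E] [NormedSpace ℝ E]
    (S X : Set (𝔼 D)) : Prop where
  hasSmoothParams : HasSmoothParams E X
  subset : S ⊆ X
  tangentAt_eq : ∀ p ∈ S, TangentAt X p = TangentAt S p ⊔ radialAt k p
  smul_mem_gaussNullity : ∀ x ∈ X, k.curvature • x ∈ gaussNullity X x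
  exists_gaussNullity_eq : ∀ x ∈ X, ∃ p ∈ S, gaussNullity X x = gaussNullity X p
  mem_of_ambientForm_self : ∀ x ∈ X,
    k.curvature * ambientForm k D x x = k.curvature ^ 2 → x ∈ S

theorem HasSmoothParams.isFlatModel_self (h : HasSmoothParams E S) :
    IsFlatModel .euclidean E S S where
  hasSmoothParams := h
  subset := Subset.rfl
  tangentAt_eq p _ := by simp [radialAt]
  smul_mem_gaussNullity x _ := by simp [SpaceFormKind.curvature]
  exists_gaussNullity_eq x hx := ⟨x, hx, rfl⟩
  mem_of_ambientForm_self x hx _ := hx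

theorem curvature_mul_ambientForm_smul_self (hk : k ≠ .euclidean) (hS : S ⊆ spaceForm k D) {y : 𝔼 D}
    (hy : y ∈ S) (ρ : ℝ) : k.curvature * ambientForm k D (ρ • y) (ρ • y) = ρ ^ 2 := by
  simp only [map_smul, smul_apply, smul_eq_mul]
  linear_combination ρ ^ 2 * curvature_mul_ambientForm_self (hS hy) +
    ρ ^ 2 * SpaceFormKind.curvature_sq hk

theorem isRadius_sqrt_ambientForm (hk : k ≠ .euclidean) (hS : S ⊆ spaceForm k D) :
    IsRadius (fun x => √(k.curvature * ambientForm k D x x)) S where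
  apply_smul ρ hρ y hy := by
    rw [curvature_mul_ambientForm_smul_self hk hS hy, Real.sqrt_sq hρ.le]
  contDiffAt := by
    rintro _ ⟨ρ, hρ, y, hy, rfl⟩
    refine ContDiffAt.sqrt (by fun_prop) ?_
    rw [curvature_mul_ambientForm_smul_self hk hS hy]
    positivity

theorem HasSmoothParams.isFlatModel_positiveCone [FiniteDimensional ℝ E] (h : HasSmoothParams E S)
    (hk : k ≠ .euclidean) (hS : S ⊆ spaceForm k D) :
    IsFlatModel k (E × ℝ) S (positiveCone S) := by
  have hm := isRadius_sqrt_ambientForm hk hS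
  have hκ := SpaceFormKind.curvature_sq hk
  refine ⟨hm.hasSmoothParams h, subset_positiveCone S, fun p hp => ?_, fun x hx => ?_, ?_, ?_⟩
  · rw [hm.tangentAt_positiveCone h hp, radialAt_eq_span, Submodule.span_singleton_smul_eq]
    exact IsUnit.of_pow_eq_one hκ two_ne_zero
  · exact Submodule.smul_mem _ _
      ((hm.hasSmoothParams h).self_mem_gaussNullity smul_mem_positiveCone hx)
  · rintro _ ⟨ρ, hρ, y, hy, rfl⟩
    exact ⟨y, hy, gaussNullity_smul smul_mem_positiveCone hρ⟩
  · rintro _ ⟨ρ, hρ, y, hy, rfl⟩ hx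
    rw [curvature_mul_ambientForm_smul_self hk hS hy, hκ] at hx
    rwa [(pow_eq_one_iff_of_nonneg hρ.le two_ne_zero).1 hx, one_smul]

namespace IsFlatModel

variable {p q v : 𝔼 D}

theorem radialAt_le (h : IsFlatModel k E S X) (hp : p ∈ S) : radialAt k p ≤ gaussNullity X p := by
  rw [radialAt_eq_span, Submodule.span_singleton_le_iff_mem]
  exact h.smul_mem_gaussNullity p (h.subset hp)

theorem tangentAt_le (h : IsFlatModel k E S X) (hp : p ∈ S) : TangentAt S p ≤ TangentAt X p :=
  h.tangentAt_eq p hp ▸ le_sup_left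

variable [FiniteDimensional ℝ E]

theorem nullityAt_eq [FiniteDimensional ℝ F] (h : IsFlatModel k E S X) (hS : HasSmoothParams F S)
    (hp : p ∈ S) : nullityAt k S p = (TangentAt S p ⊓ gaussNullity X p : Submodule ℝ (𝔼 D)) := by
  obtain ⟨φ, U, u, hφ, hu, rfl⟩ := h.hasSmoothParams p (h.subset hp)
  ext v
  refine and_congr_right fun hv => ⟨fun hα => ?_, fun hvX c W hc hcS hcu hcv hW hWS => ?_⟩
  · obtain ⟨w, hw⟩ : ∃ w, fderiv ℝ φ u w = v := by
      simpa [hφ.tangentAt_eq hu] using h.tangentAt_le hp hv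
    refine (hφ.mem_gaussNullity_iff hu).2 ⟨w, hw, hφ.fderiv_gaussMap_eq_zero hu fun y hy => ?_⟩
    rw [h.tangentAt_eq _ hp] at hy
    obtain ⟨y₁, hy₁, y₂, hy₂, rfl⟩ := Submodule.mem_sup.1 hy
    have hy₂0 : fderiv ℝ (gaussMap X ∘ φ) u w y₂ = 0 :=
      (mem_gaussNullity.1 (h.radialAt_le hp hy₂)).2 _ (hφ.gaussDeriv_eq hu ▸ ⟨w, rfl⟩)
    rw [map_add, hy₂0, add_zero]
    obtain ⟨σ, V, z, hσ, hz, hzu⟩ := hS _ hp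
    obtain ⟨c, W, hc, hcS, hcu, hcv, hW, hWS, rfl⟩ :=
      hσ.exists_tangent_field hz (hzu ▸ hv) (hzu ▸ hy₁)
    rw [hzu] at hcu
    obtain ⟨w', hw', hsum⟩ := hφ.exists_fderiv_gaussMap_add_eq hu hc (fun t => h.subset (hcS t)) hcu
      hW fun t => h.tangentAt_le (hcS t) (hWS t)
    obtain rfl : w' = w := hφ.injective_fderiv u hu (hw'.trans (hcv.trans hw.symm))
    have hW' := hα c W hc hcS hcu hcv hW hWS
    rw [← h.tangentAt_eq _ hp, ← gaussMap_eq_self_iff] at hW'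
    rw [hW'] at hsum
    exact add_eq_right.1 hsum
  · obtain ⟨w, hw, hsum⟩ := hφ.exists_fderiv_gaussMap_add_eq hu hc (fun t => h.subset (hcS t)) hcu
      hW fun t => h.tangentAt_le (hcS t) (hWS t)
    obtain ⟨w', hw', hw'0⟩ := (hφ.mem_gaussNullity_iff hu).1 hvX
    obtain rfl : w = w' := hφ.injective_fderiv u hu (hw.trans (hcv.trans hw'.symm))
    rw [hw'0, zero_apply, zero_add] at hsum
    rwa [← h.tangentAt_eq _ hp, ← gaussMap_eq_self_iff]

theorem finrank_gaussNullity [FiniteDimensional ℝ F] (h : IsFlatModel k E S X)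
    (hS : HasSmoothParams F S) (hSk : S ⊆ spaceForm k D) (hp : p ∈ S) :
    (Module.finrank ℝ (gaussNullity X p) : ℝ) = nullityIndex k S p + k.curvature ^ 2 := by
  have hsup : TangentAt S p ⊓ gaussNullity X p ⊔ radialAt k p = gaussNullity X p := by
    rw [inf_comm, inf_sup_assoc_of_le _ (h.radialAt_le hp), ← h.tangentAt_eq p hp]
    exact inf_eq_left.2 inf_le_left
  have hsum := Submodule.finrank_sup_add_finrank_inf_eq (TangentAt S p ⊓ gaussNullity X p)
    (radialAt k p)
  rw [hsup, ((disjoint_tangentAt_radialAt hSk hp).mono_left inf_le_left).eq_bot, finrank_bot,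
    add_zero] at hsum
  rw [hsum, nullityIndex, h.nullityAt_eq hS hp, Set.finrank, Submodule.span_eq, Nat.cast_add,
    finrank_radialAt (hSk hp)]

theorem isMinNullity_iff [FiniteDimensional ℝ F] (h : IsFlatModel k E S X)
    (hS : HasSmoothParams F S) (hSk : S ⊆ spaceForm k D) (hp : p ∈ S) :
    IsMinNullity X p ↔ p ∈ minNullitySet k S := by
  have hle {r : 𝔼 D} (hr : r ∈ S) : Module.finrank ℝ (gaussNullity X p) ≤
      Module.finrank ℝ (gaussNullity X r) ↔ nullityIndex k S p ≤ nullityIndex k S r := by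
    rw [← Nat.cast_le (α := ℝ), h.finrank_gaussNullity hS hSk hp, h.finrank_gaussNullity hS hSk hr,
      add_le_add_iff_right, Nat.cast_le]
  refine ⟨fun hmin => ⟨hp, fun r hr => (hle hr).1 (hmin.finrank_le r (h.subset hr))⟩,
    fun hmin => ⟨h.subset hp, fun x hx => ?_⟩⟩
  obtain ⟨r, hr, hxr⟩ := h.exists_gaussNullity_eq x hx
  exact hxr ▸ (hle hr).2 (hmin.2 r hr)

end IsFlatModel

end FlatModel

section Geodesics

variable {D : ℕ} {E : Type*} [NormedAddCommGroup E] [NormedSpace ℝ E] {S : Set (𝔼 D)}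

theorem HasSmoothParams.mem_tangentAt_of_hasDerivAt (hS : HasSmoothParams E S) {c : ℝ → 𝔼 D}
    {v : 𝔼 D} {t : ℝ} (hc : HasDerivAt c v t) (hcS : ∀ᶠ s in 𝓝 t, c s ∈ S) :
    v ∈ TangentAt S (c t) := by
  obtain ⟨φ, U, u, h, hu, hut⟩ := hS _ hcS.self_of_nhds
  obtain ⟨-, w, -, -, -, rfl⟩ := h.exists_lift hu hc hcS hut.symm
  exact hut ▸ h.fderiv_apply_mem hu w

/-- `g` is near `t` a smooth curve in `S` whose acceleration is orthogonal to `S` with respect to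
the bilinear form `β`. -/
structure IsGeodesicNear (β : 𝔼 D →L[ℝ] 𝔼 D →L[ℝ] ℝ) (S : Set (𝔼 D)) (g : ℝ → 𝔼 D) (t : ℝ) :
    Prop where
  contDiff : ContDiff ℝ ∞ g
  eventually_mem : ∀ᶠ s in 𝓝 t, g s ∈ S
  accel_normal : ∀ᶠ s in 𝓝 t, ∀ v ∈ TangentAt S (g s), β (deriv (deriv g) s) v = 0

variable {β : 𝔼 D →L[ℝ] 𝔼 D →L[ℝ] ℝ}

theorem HasSmoothParams.exists_tangent_projection [FiniteDimensional ℝ E]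
    (hS : HasSmoothParams E S)
    (hβ : ∀ p ∈ S, ∀ v ∈ TangentAt S p, (∀ w ∈ TangentAt S p, β v w = 0) → v = 0) {p : 𝔼 D}
    (hp : p ∈ S) :
    ∃ P : 𝔼 D → 𝔼 D →L[ℝ] 𝔼 D, ContDiffAt ℝ ∞ P p ∧ ∀ᶠ x in 𝓝[S] p,
      (∀ v ∈ TangentAt S x, P x v = v) ∧ ∀ v, (∀ w ∈ TangentAt S x, β v w = 0) → P x v = 0 := by
  have : CompleteSpace E := FiniteDimensional.complete ℝ E
  obtain ⟨φ, U, u, h, hu, rfl⟩ := hS p hp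
  obtain ⟨ψ, hψ, hψu, hψφ⟩ := h.exists_leftInverse u hu
  have hinv (x) (hx : x ∈ U) : (pullbackForm β (fderiv ℝ φ x)).IsInvertible := by
    refine isInvertible_pullbackForm fun w hw => (map_eq_zero_iff _ (h.injective_fderiv x hx)).1 ?_
    refine hβ _ (h.mem x hx) _ (h.fderiv_apply_mem hx w) fun y hy => ?_
    obtain ⟨w', rfl⟩ := h.tangentAt_eq hx ▸ hy
    exact hw w'
  have hψU : ∀ᶠ x in 𝓝[S] φ u, ψ x ∈ U := nhdsWithin_le_nhds <|
    hψ.continuousAt.eventually_mem (hψu.symm ▸ h.isOpen.mem_nhds hu)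
  refine ⟨fun x => formProj β (fderiv ℝ φ (ψ x)), ContDiffAt.comp (φ u) (formProj_contDiffAt
    (hψu.symm ▸ (h.contDiffAt u hu).fderiv_right (by simp)) (hψu.symm ▸ hinv u hu)) hψ, ?_⟩
  filter_upwards [hψU, hψφ] with x hxU hx
  have htangent : TangentAt S x = LinearMap.range (fderiv ℝ φ (ψ x) : E →ₗ[ℝ] 𝔼 D) := by
    rw [← h.tangentAt_eq hxU, hx]
  simp only [htangent]
  refine ⟨?_, fun v hv => formProj_eq_zero fun w => hv _ ⟨w, rfl⟩⟩
  rintro _ ⟨w, rfl⟩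
  exact formProj_apply_self (hinv _ hxU) w

/-- Differentiating `P (g s) (g' s) = g' s` turns the condition that `g''` be normal into a second
order differential equation for `g`. -/
theorem IsGeodesicNear.hasDerivAt_deriv (hS : HasSmoothParams E S) {g : ℝ → 𝔼 D} {t : ℝ}
    (hg : IsGeodesicNear β S g t) {P : 𝔼 D → 𝔼 D →L[ℝ] 𝔼 D} (hP : ContDiffAt ℝ ∞ P (g t))
    (hPS : ∀ᶠ x in 𝓝[S] g t, (∀ v ∈ TangentAt S x, P x v = v) ∧
      ∀ v, (∀ w ∈ TangentAt S x, β v w = 0) → P x v = 0) :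
    ∀ᶠ s in 𝓝 t, HasDerivAt (deriv g) (fderiv ℝ P (g s) (deriv g s) (deriv g s)) s := by
  have hg₁ (s : ℝ) : HasDerivAt g (deriv g s) s :=
    (hg.contDiff.differentiable (by simp) s).hasDerivAt
  have hg₂ (s : ℝ) : HasDerivAt (deriv g) (deriv (deriv g) s) s :=
    ((contDiff_infty_iff_deriv.1 hg.contDiff).2.differentiable (by simp) s).hasDerivAt
  have hPdiff : ∀ᶠ x in 𝓝 (g t), DifferentiableAt ℝ P x :=
    ((hP.of_le (by simp : (1 : WithTop ℕ∞) ≤ ∞)).eventually (by simp)).mono fun x hx =>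
      hx.differentiableAt (by simp)
  have hPg := (tendsto_nhdsWithin_iff.2 ⟨(hg₁ t).continuousAt, hg.eventually_mem⟩).eventually hPS
  filter_upwards [hg.eventually_mem.eventually_nhds, hg.accel_normal, hPg.eventually_nhds,
    (hg₁ t).continuousAt.eventually hPdiff] with s hsS hnormal hPs hPd
  have hfix : ∀ᶠ r in 𝓝 s, deriv g r = P (g r) (deriv g r) := by
    filter_upwards [hsS.eventually_nhds, hPs] with r hrS hPr
    exact (hPr.1 _ (hS.mem_tangentAt_of_hasDerivAt (hg₁ r) hrS)).symm
  have hleibniz := ((hPd.hasFDerivAt.comp_hasDerivAt s (hg₁ s)).clm_apply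
    (hg₂ s)).congr_of_eventuallyEq hfix
  rwa [Function.comp_apply, hPs.self_of_nhds.2 _ hnormal, add_zero] at hleibniz

theorem IsGeodesicNear.eventuallyEq [FiniteDimensional ℝ E] (hS : HasSmoothParams E S)
    (hβ : ∀ p ∈ S, ∀ v ∈ TangentAt S p, (∀ w ∈ TangentAt S p, β v w = 0) → v = 0)
    {γ c : ℝ → 𝔼 D} {t : ℝ} (hγ : IsGeodesicNear β S γ t) (hc : IsGeodesicNear β S c t)
    (h₀ : γ t = c t) (h₁ : deriv γ t = deriv c t) : γ =ᶠ[𝓝 t] c := by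
  obtain ⟨P, hP, hPS⟩ := hS.exists_tangent_projection hβ hγ.eventually_mem.self_of_nhds
  set spray : 𝔼 D × 𝔼 D → 𝔼 D × 𝔼 D := fun z => (z.2, fderiv ℝ P z.1 z.2 z.2)
  have hspray : ContDiffAt ℝ 1 spray (γ t, deriv γ t) :=
    contDiffAt_snd.prodMk (((ContDiffAt.comp (g := fderiv ℝ P) (γ t, deriv γ t)
      (hP.fderiv_right (by norm_cast)) contDiffAt_fst).clm_apply
        contDiffAt_snd).clm_apply contDiffAt_snd)
  obtain ⟨K, s, hs, hLip⟩ := hspray.exists_lipschitzOnWith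
  have hsolution {g : ℝ → 𝔼 D} (hg : IsGeodesicNear β S g t) (hg₀ : γ t = g t)
      (hg₁ : deriv γ t = deriv g t) :
      ∀ᶠ r in 𝓝 t, HasDerivAt (fun r => (g r, deriv g r)) (spray (g r, deriv g r)) r ∧
        (g r, deriv g r) ∈ s := by
    have hcont : Continuous fun r => (g r, deriv g r) :=
      hg.contDiff.continuous.prodMk (contDiff_infty_iff_deriv.1 hg.contDiff).2.continuous
    rw [hg₀] at hP hPS hs
    rw [hg₁] at hs
    filter_upwards [hg.hasDerivAt_deriv hS hP hPS, hcont.continuousAt.eventually_mem hs]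
      with r hr hrs
    exact ⟨((hg.contDiff.differentiable (by simp) r).hasDerivAt).prodMk hr, hrs⟩
  have huniq := ODE_solution_unique_of_eventually (v := fun _ => spray) (s := fun _ => s)
    (.of_forall fun _ => hLip) (hsolution hγ rfl rfl) (hsolution hc h₀ h₁) (by rw [h₀, h₁])
  exact huniq.mono fun r hr => congrArg Prod.fst hr

end Geodesics

section ModelGeodesics

/-- The generalized cosine and sine of curvature `κ`: the solutions of `y'' = -κ y` with initial
values `(1, 0)` and `(0, 1)`. -/
structure IsTrigPair (κ : ℝ) (cs sn : ℝ → ℝ) : Prop where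
  contDiff_cs : ContDiff ℝ ∞ cs
  contDiff_sn : ContDiff ℝ ∞ sn
  cs_zero : cs 0 = 1
  sn_zero : sn 0 = 0
  hasDerivAt_cs : ∀ t, HasDerivAt cs (-κ * sn t) t
  hasDerivAt_sn : ∀ t, HasDerivAt sn (cs t) t

theorem exists_isTrigPair (κ : ℝ) : ∃ cs sn : ℝ → ℝ, IsTrigPair κ cs sn := by
  have hmul (r t : ℝ) : HasDerivAt (fun t => r * t) r t := by
    simpa using (hasDerivAt_id t).const_mul r
  rcases lt_trichotomy κ 0 with hκ | rfl | hκ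
  · obtain ⟨r, hr, rfl⟩ : ∃ r : ℝ, 0 < r ∧ -r ^ 2 = κ :=
      ⟨√(-κ), Real.sqrt_pos.2 (by linarith), by rw [Real.sq_sqrt (by linarith), neg_neg]⟩
    refine ⟨fun t => Real.cosh (r * t), fun t => Real.sinh (r * t) / r, by fun_prop, by fun_prop,
      by simp, by simp, fun t => ?_, fun t => ?_⟩
    · exact (hmul r t).cosh.congr_deriv (by field_simp)
    · exact ((hmul r t).sinh.div_const r).congr_deriv (by field_simp)
  · exact ⟨fun _ => 1, id, contDiff_const, contDiff_id, rfl, rfl,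
      fun t => by simpa using hasDerivAt_const t (1 : ℝ), hasDerivAt_id⟩
  · obtain ⟨r, hr, rfl⟩ : ∃ r : ℝ, 0 < r ∧ r ^ 2 = κ :=
      ⟨√κ, Real.sqrt_pos.2 hκ, Real.sq_sqrt hκ.le⟩
    refine ⟨fun t => Real.cos (r * t), fun t => Real.sin (r * t) / r, by fun_prop, by fun_prop,
      by simp, by simp, fun t => ?_, fun t => ?_⟩
    · exact (hmul r t).cos.congr_deriv (by field_simp)
    · exact ((hmul r t).sin.div_const r).congr_deriv (by field_simp)

namespace IsTrigPair

variable {κ : ℝ} {cs sn : ℝ → ℝ}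

theorem cs_sq_add_mul_sn_sq (h : IsTrigPair κ cs sn) (t : ℝ) : cs t ^ 2 + κ * sn t ^ 2 = 1 := by
  have hderiv (s : ℝ) : HasDerivAt (fun s => cs s ^ 2 + κ * sn s ^ 2) 0 s :=
    (((h.hasDerivAt_cs s).pow 2).add (((h.hasDerivAt_sn s).pow 2).const_mul κ)).congr_deriv
      (by push_cast; ring)
  have hconst := is_const_of_deriv_eq_zero (fun s => (hderiv s).differentiableAt)
    (fun s => (hderiv s).deriv) t 0
  simpa [h.cs_zero, h.sn_zero] using hconst

theorem dvd_cs_sub_cs (h : IsTrigPair κ cs sn) (t t' : ℝ) : κ ∣ cs t' - cs t := by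
  rcases eq_or_ne κ 0 with rfl | hκ
  · have hconst := is_const_of_deriv_eq_zero (fun s => (h.hasDerivAt_cs s).differentiableAt)
      (fun s => by simp [(h.hasDerivAt_cs s).deriv]) t' t
    rw [hconst, sub_self]
  · exact (isUnit_iff_ne_zero.2 hκ).dvd

variable {V : Type*} [NormedAddCommGroup V] [NormedSpace ℝ V]

theorem hasDerivAt_smul_add_smul (h : IsTrigPair κ cs sn) (q v : V) (t : ℝ) :
    HasDerivAt (fun t => cs t • q + sn t • v) ((-κ * sn t) • q + cs t • v) t :=
  ((h.hasDerivAt_cs t).smul_const q).add ((h.hasDerivAt_sn t).smul_const v)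

theorem deriv_smul_add_smul (h : IsTrigPair κ cs sn) (q v : V) :
    deriv (fun t => cs t • q + sn t • v) = fun t => (-κ * sn t) • q + cs t • v :=
  funext fun t => (h.hasDerivAt_smul_add_smul q v t).deriv

theorem deriv_deriv_smul_add_smul (h : IsTrigPair κ cs sn) (q v : V) (t : ℝ) :
    deriv (deriv fun t => cs t • q + sn t • v) t = -κ • (cs t • q + sn t • v) := by
  rw [h.deriv_smul_add_smul, smul_add, smul_smul, smul_smul]
  exact ((((h.hasDerivAt_sn t).const_mul (-κ)).smul_const q).add
    ((h.hasDerivAt_cs t).smul_const v)).deriv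

theorem contDiff_smul_add_smul (h : IsTrigPair κ cs sn) (q v : V) :
    ContDiff ℝ ∞ fun t => cs t • q + sn t • v :=
  (h.contDiff_cs.smul contDiff_const).add (h.contDiff_sn.smul contDiff_const)

end IsTrigPair

variable {k : SpaceFormKind} {D : ℕ} {S X : Set (𝔼 D)} {q v : 𝔼 D} {cs sn : ℝ → ℝ}

theorem IsGeodesicOn.isGeodesicNear {γ : ℝ → 𝔼 D} (hγ : IsGeodesicOn k S γ) (t : ℝ) :
    IsGeodesicNear (ambientForm k D) S γ t where
  contDiff := hγ.smooth
  eventually_mem := .of_forall hγ.mem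
  accel_normal := .of_forall fun s v hv => ambientForm_apply (k := k) _ v ▸ hγ.accel_normal s v hv

theorem IsTrigPair.isGeodesicNear
    (h : IsTrigPair (k.curvature * ambientForm k D v v) cs sn) (hS : S ⊆ spaceForm k D) {t : ℝ}
    (hmem : ∀ᶠ s in 𝓝 t, cs s • q + sn s • v ∈ S) :
    IsGeodesicNear (ambientForm k D) S (fun t => cs t • q + sn t • v) t where
  contDiff := h.contDiff_smul_add_smul q v
  eventually_mem := hmem
  accel_normal := .of_forall fun s w hw => by
    have hperp := curvature_mul_ambientForm_of_mem_tangentAt hS hw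
    rw [h.deriv_deriv_smul_add_smul, map_smul, smul_apply, smul_eq_mul]
    linear_combination -ambientForm k D v v * hperp

variable {E : Type*} [NormedAddCommGroup E] [NormedSpace ℝ E]

namespace IsFlatModel

theorem smul_add_smul_mem (h : IsFlatModel k E S X) (hS : S ⊆ spaceForm k D) (hq : q ∈ S)
    (hv : v ∈ TangentAt S q) (hcs : IsTrigPair (k.curvature * ambientForm k D v v) cs sn) {t : ℝ}
    (ht : cs t • q + sn t • v ∈ X) : cs t • q + sn t • v ∈ S := by
  refine h.mem_of_ambientForm_self _ ht ?_
  have hqq := curvature_mul_ambientForm_self (hS hq)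
  have hqv := curvature_mul_ambientForm_of_mem_tangentAt hS hv
  simp only [map_add, map_smul, add_apply, smul_apply, smul_eq_mul, ambientForm_comm v q]
  linear_combination cs t ^ 2 * hqq + 2 * cs t * sn t * hqv +
    k.curvature ^ 2 * hcs.cs_sq_add_mul_sn_sq t -
    sn t ^ 2 * ambientForm k D v v * k.curvature_pow_three

theorem mul_smul_mem_gaussNullity (h : IsFlatModel k E S X) {x : 𝔼 D} (hx : x ∈ X) (r : ℝ) :
    (k.curvature * r) • x ∈ gaussNullity X x := by
  rw [mul_comm, mul_smul]
  exact Submodule.smul_mem _ r (h.smul_mem_gaussNullity x hx)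

theorem cs_sub_smul_mem_gaussNullity (h : IsFlatModel k E S X)
    (hcs : IsTrigPair (k.curvature * ambientForm k D v v) cs sn) {x : 𝔼 D} (hx : x ∈ X)
    (t t' : ℝ) : (cs t' - cs t) • x ∈ gaussNullity X x := by
  obtain ⟨r, hr⟩ := hcs.dvd_cs_sub_cs t t'
  rw [hr, mul_assoc]
  exact h.mul_smul_mem_gaussNullity hx _

theorem sub_mem_gaussNullity (h : IsFlatModel k E S X)
    (hcs : IsTrigPair (k.curvature * ambientForm k D v v) cs sn) (hq : q ∈ X)
    (hv : v ∈ gaussNullity X q) (t t' : ℝ) :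
    cs t' • q + sn t' • v - (cs t • q + sn t • v) ∈ gaussNullity X q := by
  rw [add_sub_add_comm, ← sub_smul, ← sub_smul]
  exact add_mem (h.cs_sub_smul_mem_gaussNullity hcs hq t t') (Submodule.smul_mem _ _ hv)

theorem deriv_mem_gaussNullity (h : IsFlatModel k E S X)
    (hcs : IsTrigPair (k.curvature * ambientForm k D v v) cs sn) (hq : q ∈ X)
    (hv : v ∈ gaussNullity X q) (t : ℝ) :
    deriv (fun t => cs t • q + sn t • v) t ∈ gaussNullity X q := by
  rw [(hcs.hasDerivAt_smul_add_smul q v t).deriv, neg_mul, mul_assoc, ← mul_neg]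
  exact add_mem (h.mul_smul_mem_gaussNullity hq _) (Submodule.smul_mem _ _ hv)

variable [FiniteDimensional ℝ E] {F : Type*} [NormedAddCommGroup F] [NormedSpace ℝ F]
  [FiniteDimensional ℝ F]

theorem eventually_eq_and_isParallel (h : IsFlatModel k E S X) (hS : HasSmoothParams F S)
    (hSk : S ⊆ spaceForm k D) (hq : q ∈ S) (hqmin : IsMinNullity X q) (hv : v ∈ TangentAt S q)
    (hvX : v ∈ gaussNullity X q)
    (hcs : IsTrigPair (k.curvature * ambientForm k D v v) cs sn) {γ c : ℝ → 𝔼 D}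
    (hγ : IsGeodesicOn k S γ) (hc : c = fun t => cs t • q + sn t • v) {t : ℝ}
    (h₀ : γ t = c t) (h₁ : deriv γ t = deriv c t) (hpar : IsParallel X q (c t)) :
    ∀ᶠ s in 𝓝 t, (γ s = c s ∧ deriv γ s = deriv c s) ∧ IsParallel X q (c s) := by
  subst hc
  have hpar' := (Continuous.prodMk_right t).continuousAt.eventually <|
    (hpar.isMinNullity hqmin).eventually_isParallel_curve h.hasSmoothParams
      (hcs.contDiff_smul_add_smul q v).continuous
      (h.sub_mem_gaussNullity hcs (h.subset hq) hvX)
  replace hpar' := hpar'.mono fun s hs => hs hpar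
  have huniq := (hγ.isGeodesicNear t).eventuallyEq hS
    (fun p hp v => eq_zero_of_mem_tangentAt_of_ambientForm_eq_zero hSk hp)
    (hcs.isGeodesicNear hSk (hpar'.mono fun s hs => h.smul_add_smul_mem hSk hq hv hcs hs.mem)) h₀ h₁
  exact (huniq.and huniq.deriv).and hpar'

theorem isParallel_of_mem_closure (h : IsFlatModel k E S X) (hqmin : IsMinNullity X q)
    (hvX : v ∈ gaussNullity X q) (hcs : IsTrigPair (k.curvature * ambientForm k D v v) cs sn)
    {C : Set ℝ} (hC : IsPreconnected C) (h0 : 0 ∈ C)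
    (hpar : ∀ t ∈ C, IsParallel X q (cs t • q + sn t • v)) {t : ℝ} (ht : t ∈ closure C)
    (hmem : cs t • q + sn t • v ∈ X) : IsParallel X q (cs t • q + sn t • v) := by
  have hmin := hqmin.of_gaussDeriv_le h.hasSmoothParams hmem <|
    hqmin.gaussDeriv_le_of_mem_closure h.hasSmoothParams hvX hcs.contDiff_cs.continuous
      hcs.contDiff_sn.continuous hcs.cs_zero hcs.sn_zero
      (fun x => h.cs_sub_smul_mem_gaussNullity hcs) hC h0 hpar ht hmem
  have hloc := (Continuous.prodMk_left t).continuousAt.eventually <|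
    hmin.eventually_isParallel_curve h.hasSmoothParams
      (hcs.contDiff_smul_add_smul q v).continuous
      (h.sub_mem_gaussNullity hcs hqmin.mem hvX)
  obtain ⟨s, hs, hsC⟩ := ((mem_closure_iff_frequently.1 ht).and_eventually hloc).exists
  exact hsC (hpar s hs)

theorem isParallel_geodesic (h : IsFlatModel k E S X) (hS : HasSmoothParams F S)
    (hSk : S ⊆ spaceForm k D) {γ : ℝ → 𝔼 D} (hγ : IsGeodesicOn k S γ)
    (hmin : IsMinNullity X (γ 0)) (hnull : deriv γ 0 ∈ gaussNullity X (γ 0)) (t : ℝ) :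
    IsParallel X (γ 0) (γ t) ∧ deriv γ t ∈ gaussNullity X (γ 0) := by
  have htangent : deriv γ 0 ∈ TangentAt S (γ 0) := hS.mem_tangentAt_of_hasDerivAt
    (hγ.smooth.differentiable (by simp) 0).hasDerivAt (.of_forall hγ.mem)
  obtain ⟨cs, sn, hcs⟩ := exists_isTrigPair
    (k.curvature * ambientForm k D (deriv γ 0) (deriv γ 0))
  obtain ⟨c, hc⟩ : ∃ c, c = fun t => cs t • γ 0 + sn t • deriv γ 0 := ⟨_, rfl⟩
  have hcsmooth : ContDiff ℝ ∞ c := hc ▸ hcs.contDiff_smul_add_smul _ _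
  suffices ∀ t, (γ t = c t ∧ deriv γ t = deriv c t) ∧ IsParallel X (γ 0) (c t) by
    obtain ⟨⟨hγc, hγc'⟩, hpar⟩ := this t
    exact ⟨hγc ▸ hpar, hγc' ▸ hc ▸ h.deriv_mem_gaussNullity hcs (h.subset (hγ.mem 0)) hnull t⟩
  have hc₀ : c 0 = γ 0 := by simp [hc, hcs.cs_zero, hcs.sn_zero]
  have hc₁ : deriv c 0 = deriv γ 0 := by
    simp [hc, hcs.deriv_smul_add_smul, hcs.cs_zero, hcs.sn_zero]
  refine forall_of_eventually_of_closure (a := 0)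
    ⟨⟨hc₀.symm, hc₁.symm⟩, hc₀.symm ▸ .refl (h.subset (hγ.mem 0))⟩
    (fun t ht => h.eventually_eq_and_isParallel hS hSk (hγ.mem 0) hmin htangent hnull hcs hγ hc
      ht.1.1 ht.1.2 ht.2) fun C hC h0 hCQ t ht => ?_
  have heq : γ t = c t := closure_minimal (fun s hs => (hCQ s hs).1.1)
    (isClosed_eq hγ.smooth.continuous hcsmooth.continuous) ht
  have heq' : deriv γ t = deriv c t := closure_minimal (fun s hs => (hCQ s hs).1.2)
    (isClosed_eq (contDiff_infty_iff_deriv.1 hγ.smooth).2.continuous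
      (contDiff_infty_iff_deriv.1 hcsmooth).2.continuous) ht
  refine ⟨⟨heq, heq'⟩, ?_⟩
  have hmem : c t ∈ X := heq ▸ h.subset (hγ.mem t)
  subst hc
  exact h.isParallel_of_mem_closure hmin hnull hcs hC h0 (fun s hs => (hCQ s hs).2) ht hmem

theorem geodesic_mem_minNullitySet (h : IsFlatModel k E S X) (hS : HasSmoothParams F S)
    (hSk : S ⊆ spaceForm k D) {γ : ℝ → 𝔼 D} (hγ : IsGeodesicOn k S γ)
    (hmin : γ 0 ∈ minNullitySet k S) (hnull : deriv γ 0 ∈ nullityAt k S (γ 0)) (t : ℝ) :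
    γ t ∈ minNullitySet k S ∧ deriv γ t ∈ nullityAt k S (γ t) := by
  rw [h.nullityAt_eq hS (hγ.mem 0)] at hnull
  rw [← h.isMinNullity_iff hS hSk (hγ.mem 0)] at hmin
  obtain ⟨hpar, hmem⟩ := h.isParallel_geodesic hS hSk hγ hmin hnull.2 t
  rw [h.nullityAt_eq hS (hγ.mem t), ← h.isMinNullity_iff hS hSk (hγ.mem t)]
  refine ⟨hpar.isMinNullity hmin, ?_, hpar.gaussNullity_eq ▸ hmem⟩
  exact hS.mem_tangentAt_of_hasDerivAt (hγ.smooth.differentiable (by simp) t).hasDerivAt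
    (.of_forall hγ.mem)

end IsFlatModel

end ModelGeodesics

section Leaves

theorem deriv_smoothTransition_of_nonpos {x : ℝ} (hx : x ≤ 0) :
    deriv Real.smoothTransition x = 0 := by
  refine IsLocalMin.deriv_eq_zero (.of_forall fun y => ?_)
  rw [Real.smoothTransition.zero_of_nonpos hx]
  exact Real.smoothTransition.nonneg y

theorem deriv_smoothTransition_of_one_le {x : ℝ} (hx : 1 ≤ x) :
    deriv Real.smoothTransition x = 0 := by
  refine IsLocalMax.deriv_eq_zero (.of_forall fun y => ?_)
  rw [Real.smoothTransition.one_of_one_le hx]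
  exact Real.smoothTransition.le_one y

section SmoothConcat

variable {V : Type*} [NormedAddCommGroup V] {c₁ c₂ : ℝ → V}

/-- The concatenation of two curves with `c₁ 1 = c₂ 0`, each run at a speed which vanishes to
infinite order at the junction, so that it is smooth if `c₁` and `c₂` are. -/
def smoothConcat (c₁ c₂ : ℝ → V) (t : ℝ) : V :=
  c₁ (Real.smoothTransition (2 * t)) + c₂ (Real.smoothTransition (2 * t - 1)) - c₂ 0

@[simp]
theorem smoothConcat_zero (c₁ c₂ : ℝ → V) : smoothConcat c₁ c₂ 0 = c₁ 0 := by
  simp [smoothConcat, Real.smoothTransition.zero_of_nonpos]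

theorem smoothConcat_one (h : c₁ 1 = c₂ 0) : smoothConcat c₁ c₂ 1 = c₂ 1 := by
  have hσ : Real.smoothTransition 2 = 1 := Real.smoothTransition.one_of_one_le one_le_two
  norm_num [smoothConcat, hσ, h]

variable [NormedSpace ℝ V]

theorem contDiff_smoothConcat (h₁ : ContDiff ℝ ∞ c₁) (h₂ : ContDiff ℝ ∞ c₂) :
    ContDiff ℝ ∞ (smoothConcat c₁ c₂) := by
  have : ContDiff ℝ ∞ Real.smoothTransition := Real.smoothTransition.contDiff
  unfold smoothConcat
  fun_prop

theorem hasDerivAt_smoothConcat (h₁ : Differentiable ℝ c₁) (h₂ : Differentiable ℝ c₂) (t : ℝ) :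
    HasDerivAt (smoothConcat c₁ c₂)
      ((deriv Real.smoothTransition (2 * t) * 2) • deriv c₁ (Real.smoothTransition (2 * t)) +
        (deriv Real.smoothTransition (2 * t - 1) * 2) •
          deriv c₂ (Real.smoothTransition (2 * t - 1))) t := by
  have hσ (x : ℝ) : HasDerivAt Real.smoothTransition (deriv Real.smoothTransition x) x :=
    ((Real.smoothTransition.contDiff (n := 1)).differentiable one_ne_zero x).hasDerivAt
  have hmul : HasDerivAt (fun t : ℝ => 2 * t) 2 t := by
    simpa using (hasDerivAt_id t).const_mul (2 : ℝ)
  exact (((h₁ _).hasDerivAt.scomp t ((hσ _).comp t hmul)).add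
    ((h₂ _).hasDerivAt.scomp t ((hσ _).comp t (hmul.sub_const 1)))).sub_const _

theorem smoothConcat_eq_or (h₁ : Differentiable ℝ c₁) (h₂ : Differentiable ℝ c₂)
    (h : c₁ 1 = c₂ 0) (t : ℝ) :
    (∃ s r : ℝ, smoothConcat c₁ c₂ t = c₁ s ∧ deriv (smoothConcat c₁ c₂) t = r • deriv c₁ s) ∨
      ∃ s r : ℝ, smoothConcat c₁ c₂ t = c₂ s ∧ deriv (smoothConcat c₁ c₂) t = r • deriv c₂ s := by
  rw [(hasDerivAt_smoothConcat h₁ h₂ t).deriv]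
  rcases le_total (2 * t) 1 with ht | ht
  · have ht' : 2 * t - 1 ≤ 0 := by linarith
    refine .inl ⟨_, _, ?_, by
      rw [deriv_smoothTransition_of_nonpos ht', zero_mul, zero_smul, add_zero]⟩
    rw [smoothConcat, Real.smoothTransition.zero_of_nonpos ht', add_sub_cancel_right]
  · refine .inr ⟨_, _, ?_, by
      rw [deriv_smoothTransition_of_one_le ht, zero_mul, zero_smul, zero_add]⟩
    rw [smoothConcat, Real.smoothTransition.one_of_one_le ht, h, add_sub_cancel_left]

end SmoothConcat

variable {k : SpaceFormKind} {D : ℕ} {S A X : Set (𝔼 D)} {p q r : 𝔼 D}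

theorem mem_of_mem_leafThrough (hq : q ∈ leafThrough k S A p) : q ∈ A := by
  obtain ⟨c, -, hcA, -, -, rfl⟩ := hq
  exact hcA 1

theorem leafThrough_trans (hsmul : ∀ x ∈ A, ∀ a : ℝ, ∀ v ∈ nullityAt k S x, a • v ∈ nullityAt k S x)
    (hq : q ∈ leafThrough k S A p) (hr : r ∈ leafThrough k S A q) : r ∈ leafThrough k S A p := by
  obtain ⟨c₁, h₁, hA₁, hN₁, rfl, rfl⟩ := hq
  obtain ⟨c₂, h₂, hA₂, hN₂, h, rfl⟩ := hr
  have heq := smoothConcat_eq_or (h₁.differentiable (by simp)) (h₂.differentiable (by simp)) h.symm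
  refine ⟨smoothConcat c₁ c₂, contDiff_smoothConcat h₁ h₂, fun t => ?_, fun t => ?_,
    smoothConcat_zero _ _, smoothConcat_one h.symm⟩
  · rcases heq t with ⟨s, _, hs, -⟩ | ⟨s, _, hs, -⟩ <;> rw [hs]
    exacts [hA₁ s, hA₂ s]
  · rcases heq t with ⟨s, a, hs, hs'⟩ | ⟨s, a, hs, hs'⟩ <;> rw [hs, hs']
    exacts [hsmul _ (hA₁ s) a _ (hN₁ s), hsmul _ (hA₂ s) a _ (hN₂ s)]

theorem curve_mem_leafThrough
    (hsmul : ∀ x ∈ A, ∀ a : ℝ, ∀ v ∈ nullityAt k S x, a • v ∈ nullityAt k S x) {γ : ℝ → 𝔼 D}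
    (hγ : ContDiff ℝ ∞ γ) (hA : ∀ t, γ t ∈ A) (hN : ∀ t, deriv γ t ∈ nullityAt k S (γ t)) (t : ℝ) :
    γ t ∈ leafThrough k S A (γ 0) := by
  refine ⟨fun s => γ (t * s), by fun_prop, fun s => hA _, fun s => ?_, by simp, by simp⟩
  rw [deriv_comp_mul_left]
  exact hsmul _ (hA _) _ _ (hN _)

variable {E F : Type*} [NormedAddCommGroup E] [NormedSpace ℝ E] [NormedAddCommGroup F]
  [NormedSpace ℝ F] [FiniteDimensional ℝ E] [FiniteDimensional ℝ F]

theorem IsFlatModel.smul_mem_nullityAt (h : IsFlatModel k E S X) (hS : HasSmoothParams F S)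
    {x v : 𝔼 D} (hx : x ∈ S) (a : ℝ) (hv : v ∈ nullityAt k S x) : a • v ∈ nullityAt k S x := by
  rw [h.nullityAt_eq hS hx] at hv ⊢
  exact Submodule.smul_mem _ a hv

theorem IsFlatModel.exists_geodesic_mem_leafThrough (h : IsFlatModel k E S X)
    (hS : HasSmoothParams F S) (hSk : S ⊆ spaceForm k D) (hcomplete : GeodComplete k S)
    (hq : q ∈ leafThrough k S (minNullitySet k S) p) {v : 𝔼 D} (hv : v ∈ nullityAt k S q) :
    ∃ γ : ℝ → 𝔼 D, IsGeodesicOn k S γ ∧ γ 0 = q ∧ deriv γ 0 = v ∧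
      ∀ t, γ t ∈ leafThrough k S (minNullitySet k S) p := by
  have hqmin := mem_of_mem_leafThrough hq
  obtain ⟨γ, hγ, rfl, rfl⟩ := hcomplete q hqmin.1 v hv.1
  have hstay := h.geodesic_mem_minNullitySet hS hSk hγ hqmin hv
  have hsmul (x) (hx : x ∈ minNullitySet k S) (a : ℝ) (v) (hv : v ∈ nullityAt k S x) :=
    h.smul_mem_nullityAt hS hx.1 a hv
  exact ⟨γ, hγ, rfl, rfl, fun t => leafThrough_trans hsmul hq <|
    curve_mem_leafThrough hsmul hγ.smooth (fun t => (hstay t).1) (fun t => (hstay t).2) t⟩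

end Leaves

end

/-- **Completeness of integral manifolds of the nullity distribution** (Ferus; Olmos–Vittone).
Let `M = S` be a complete Riemannian manifold isometrically immersed as an `n`-dimensional
submanifold of a space form (Euclidean space `ℝ^{n+k}`, the round sphere `S^{n+k}`, or hyperbolic
space `H^{n+k}`).  Then for every point `p` of minimal index of nullity, the maximal integral
manifold of the nullity distribution `𝒩` through `p` (a totally geodesic submanifold of `M`, with
the induced metric) is a complete Riemannian manifold: every geodesic initial condition tangent to
the leaf gives rise to a geodesic of `M` defined on all of `ℝ` and remaining inside the leaf. -/
theorem nullity_leaf_complete (k : SpaceFormKind) (n codim : ℕ)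
    (S : Set (EuclideanSpace ℝ (Fin (ambientDim k n codim))))
    (hSF : S ⊆ spaceForm k (ambientDim k n codim))
    (hsub : IsSubmanifold S n)
    (hcomplete : GeodComplete k S)
    (p : EuclideanSpace ℝ (Fin (ambientDim k n codim)))
    (hp : p ∈ minNullitySet k S) :
    ∀ q ∈ leafThrough k S (minNullitySet k S) p, ∀ v ∈ nullityAt k S q,
      ∃ γ : ℝ → EuclideanSpace ℝ (Fin (ambientDim k n codim)),
        IsGeodesicOn k S γ ∧ γ 0 = q ∧ deriv γ 0 = v ∧
        ∀ t, γ t ∈ leafThrough k S (minNullitySet k S) p := by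
  intro q hq v hv
  have hS := hsub.hasSmoothParams
  rcases eq_or_ne k .euclidean with rfl | hk
  · exact hS.isFlatModel_self.exists_geodesic_mem_leafThrough hS hSF hcomplete hq hv
  · exact (hS.isFlatModel_positiveCone hk hSF).exists_geodesic_mem_leafThrough hS hSF hcomplete
      hq hv
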